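/- arXiv:1306.3841 — 2 statements merged into one kernel-verified Lean document; each statement's English description precedes it below -/
import Mathlib

section
/- Let d ≥ 2 and let E⁽¹⁾,…,E⁽ᵈ⁾ be independent one-dimensional fractal percolations with common scale M ≥ 2 and probabilities p₁,…,p_d ∈ (0,1] satisfying ∏_{i=1}^d p_i > M^{-(d−1)} and, for every j, ∏_{i≠j} p_i < M^{-(d−2)}. Fix a unit vector a = (a₁,…,a_d) with all a_i > 0 and fix ε > 0. Then there exists a constant C such that, for almost every realization with all E⁽ⁱ⁾ nonempty, there is N such that for all n > N and every t ∈ ℝ: if the hyperplane H_t intersects a cube K_n(x₁,…,x_d) of Ẽ_n, then H_t intersects at most C·n^{(1+ε)(d−2)} other cubes K_n(y₁,…,y_d) of Ẽ_n for which x_i = y_i for some i ∈ {1,…,d}. -/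
open MeasureTheory Set ENNReal ProbabilityTheory Real

noncomputable section

/-- The alphabet indexing the `M^d` subcubes of a cube in `[0,1]^d`. -/
abbrev Alpha (d M : ℕ) : Type := Fin d → Fin M

/-- Finite nonempty words over the alphabet; they index `M`-adic cubes. -/
abbrev Word (d M : ℕ) : Type := {w : List (Alpha d M) // w ≠ []}

/-- The sample space: `{0,1}`-labelings of all finite nonempty words. -/
abbrev PercSpace (d M : ℕ) : Type := Word d M → Bool

/-- `P` is the product measure making the labels i.i.d. Bernoulli(`p`). -/
def IsBernoulliPerc (d M : ℕ) (p : ℝ) (P : Measure (PercSpace d M)) : Prop :=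
  IsProbabilityMeasure P ∧
    ∀ (S : Finset (Word d M)) (b : Word d M → Bool),
      P {ω | ∀ w ∈ S, ω w = b w} =
        ∏ w ∈ S, if b w then ENNReal.ofReal p else ENNReal.ofReal (1 - p)

/-- A level-`w.length` cube is retained iff its word and every nonempty prefix
of its word carry label 1. -/
def Retained (d M : ℕ) (ω : PercSpace d M) (w : List (Alpha d M)) : Prop :=
  ∀ (u : List (Alpha d M)) (hu : u ≠ []), u <+: w → ω ⟨u, hu⟩ = true

/-- The `i`-th coordinate of the lower-left corner of the cube indexed by `w`. -/
def wordBase (d M : ℕ) (w : List (Alpha d M)) (i : Fin d) : ℝ :=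
  ∑ j : Fin w.length, ((w.get j) i : ℝ) * (M : ℝ) ^ (-(j : ℤ) - 1)

/-- The closed `M`-adic cube of level `w.length` indexed by the word `w`. -/
def wordCube (d M : ℕ) (w : List (Alpha d M)) : Set (EuclideanSpace ℝ (Fin d)) :=
  {x | ∀ i, wordBase d M w i ≤ x i ∧ x i ≤ wordBase d M w i + (M : ℝ) ^ (-(w.length : ℤ))}

/-- `E_n`, the union of the retained level-`n` cubes. -/
def approx (d M : ℕ) (ω : PercSpace d M) (n : ℕ) : Set (EuclideanSpace ℝ (Fin d)) :=
  ⋃ w ∈ {w : List (Alpha d M) | w.length = n ∧ Retained d M ω w}, wordCube d M w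

/-- The fractal percolation set `E = ⋂_{n ≥ 1} E_n`. -/
def percLimit (d M : ℕ) (ω : PercSpace d M) : Set (EuclideanSpace ℝ (Fin d)) :=
  ⋂ n ∈ {n : ℕ | 1 ≤ n}, approx d M ω n

/-- Words indexing `M`-adic subintervals of `[0,1]`. -/
abbrev Word1 (M : ℕ) : Type := {w : List (Fin M) // w ≠ []}

/-- Sample space of a one-dimensional fractal percolation. -/
abbrev Perc1 (M : ℕ) : Type := Word1 M → Bool

/-- `P` is the joint distribution of `d` independent one-dimensional fractal
percolations with probabilities `p i`: all labels are independent, and the labels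
of the `i`-th percolation are Bernoulli(`p i`). -/
def IsIndepBernoulli1 (d M : ℕ) (p : Fin d → ℝ) (P : Measure (Fin d → Perc1 M)) : Prop :=
  IsProbabilityMeasure P ∧
    ∀ (S : Finset (Fin d × Word1 M)) (b : Fin d × Word1 M → Bool),
      P {ω | ∀ q ∈ S, ω q.1 q.2 = b q} =
        ∏ q ∈ S, if b q then ENNReal.ofReal (p q.1) else ENNReal.ofReal (1 - p q.1)

/-- A level-`w.length` interval is retained iff its word and every nonempty
prefix of its word carry label 1. -/
def Retained1 (M : ℕ) (ω : Perc1 M) (w : List (Fin M)) : Prop :=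
  ∀ (u : List (Fin M)) (hu : u ≠ []), u <+: w → ω ⟨u, hu⟩ = true

/-- Left endpoint of the `M`-adic interval indexed by the word `w`. -/
def base1 (M : ℕ) (w : List (Fin M)) : ℝ :=
  ∑ j : Fin w.length, (w.get j : ℝ) * (M : ℝ) ^ (-(j : ℤ) - 1)

/-- The closed `M`-adic interval of level `w.length` indexed by `w`. -/
def interval1 (M : ℕ) (w : List (Fin M)) : Set ℝ :=
  Icc (base1 M w) (base1 M w + (M : ℝ) ^ (-(w.length : ℤ)))

/-- `E_n`, the union of the retained level-`n` intervals. -/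
def approx1 (M : ℕ) (ω : Perc1 M) (n : ℕ) : Set ℝ :=
  ⋃ w ∈ {w : List (Fin M) | w.length = n ∧ Retained1 M ω w}, interval1 M w

/-- The one-dimensional fractal percolation set `E = ⋂_{n ≥ 1} E_n`. -/
def limit1 (M : ℕ) (ω : Perc1 M) : Set ℝ :=
  ⋂ n ∈ {n : ℕ | 1 ≤ n}, approx1 M ω n

/-- The hyperplane `H_t = {y : a ⬝ y = t}`. -/
def Hplane (d : ℕ) (a : Fin d → ℝ) (t : ℝ) : Set (EuclideanSpace ℝ (Fin d)) :=
  {y | ∑ i, a i * y i = t}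

/-- The cube of `Ẽ_n` indexed by the `d`-tuple of words `w`. -/
def prodCube (d M : ℕ) (w : Fin d → List (Fin M)) : Set (EuclideanSpace ℝ (Fin d)) :=
  {x | ∀ i, x i ∈ interval1 M (w i)}

/-- All words of length `n`. -/
def wordsN (M n : ℕ) : Finset (List (Fin M)) :=
  (Finset.univ : Finset (Fin n → Fin M)).image List.ofFn

lemma mem_wordsN {M n : ℕ} {w : List (Fin M)} : w ∈ wordsN M n ↔ w.length = n := by
  unfold wordsN
  simp only [Finset.mem_image, Finset.mem_univ, true_and]
  constructor
  · rintro ⟨f, rfl⟩; simp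
  · rintro rfl; exact ⟨w.get, List.ofFn_get w⟩

lemma card_wordsN_le (M n : ℕ) : (wordsN M n).card ≤ M ^ n := by
  refine Finset.card_image_le.trans ?_
  simp

/-- Nonempty prefixes of the words in `T`. -/
def UU {M : ℕ} (T : Finset (List (Fin M))) : Finset (Word1 M) :=
  (T.biUnion fun w => w.inits.toFinset).subtype (fun w => w ≠ [])

lemma mem_UU {M : ℕ} {T : Finset (List (Fin M))} {u : Word1 M} :
    u ∈ UU T ↔ ∃ w ∈ T, u.1 <+: w := by
  simp [UU]

/-- Number of new prefixes brought by `x`. -/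
def mm {M : ℕ} (T : Finset (List (Fin M))) (x : List (Fin M)) : ℕ := (UU {x} \ UU T).card

lemma take_mem_aux {M : ℕ} {T : Finset (List (Fin M))} {x : List (Fin M)} {m n : ℕ}
    (hx : x.length = n) (hm : mm T x ≤ m) (hmn : m < n) :
    ∃ v ∈ T, x.take (n - m) <+: v := by
  by_contra hcon
  push Not at hcon
  have hsub : Finset.Icc (n - m) n ⊆ (UU {x} \ UU T).image (fun u => u.1.length) := by
    intro k hk
    rw [Finset.mem_Icc] at hk
    have hlen : (x.take k).length = k := by rw [List.length_take]; omega
    have hne : x.take k ≠ [] := by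
      intro h; rw [h] at hlen; simp at hlen; omega
    rw [Finset.mem_image]
    refine ⟨⟨x.take k, hne⟩, ?_, hlen⟩
    rw [Finset.mem_sdiff, mem_UU, mem_UU]
    refine ⟨⟨x, by simp, ⟨x.drop k, List.take_append_drop k x⟩⟩, ?_⟩
    rintro ⟨v, hv, hpre⟩
    exact hcon v hv ((List.take_prefix_take_left hk.1).trans hpre)
  have h1 := Finset.card_le_card hsub
  have h2 := h1.trans Finset.card_image_le
  rw [Nat.card_Icc] at h2
  unfold mm at hm
  omega

lemma count_le {M n m R : ℕ} (hM : 2 ≤ M) {T : Finset (List (Fin M))} (hR : 1 ≤ R)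
    (hT : T.card ≤ R) :
    ((wordsN M n).filter (fun x => mm T x ≤ m)).card ≤ R * M ^ m := by
  by_cases hmn : m < n
  · have hsub : (wordsN M n).filter (fun x => mm T x ≤ m) ⊆
        (T ×ˢ wordsN M m).image (fun q => q.1.take (n - m) ++ q.2) := by
      intro x hx
      rw [Finset.mem_filter, mem_wordsN] at hx
      obtain ⟨v, hv, hpre⟩ := take_mem_aux hx.1 hx.2 hmn
      rw [Finset.mem_image]
      refine ⟨(v, x.drop (n - m)), ?_, ?_⟩
      · rw [Finset.mem_product, mem_wordsN]
        refine ⟨hv, ?_⟩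
        simp only [List.length_drop]; omega
      · have h := List.prefix_iff_eq_take.1 hpre
        have hl : (x.take (n - m)).length = n - m := by rw [List.length_take]; omega
        rw [hl] at h
        simp only
        rw [← h, List.take_append_drop]
    refine (Finset.card_le_card hsub).trans (Finset.card_image_le.trans ?_)
    rw [Finset.card_product]
    exact Nat.mul_le_mul hT (card_wordsN_le M m)
  · push Not at hmn
    calc _ ≤ (wordsN M n).card := Finset.card_filter_le _ _
      _ ≤ M ^ n := card_wordsN_le M n
      _ ≤ M ^ m := Nat.pow_le_pow_right (by omega) hmn
      _ = 1 * M ^ m := (one_mul _).symm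
      _ ≤ R * M ^ m := Nat.mul_le_mul_right _ hR

lemma geom_bound {b : ℝ} (hb : 1 < b) (m : ℕ) :
    ∑ i ∈ Finset.range (m + 1), b ^ i ≤ b / (b - 1) * b ^ m := by
  rw [geom_sum_eq hb.ne']
  have : 0 < b - 1 := by linarith
  rw [div_mul_eq_mul_div]
  gcongr
  rw [pow_succ]
  linarith [mul_comm b (b ^ m)]

lemma one_coord {M n m R : ℕ} (hM : 2 ≤ M) {T : Finset (List (Fin M))} (hR : 1 ≤ R)
    (hT : T.card ≤ R) {p : ℝ} (hp : 0 < p) (hMp : 1 < M * p) :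
    ∑ x ∈ (wordsN M n).filter (fun x => mm T x ≤ m), p ^ mm T x ≤
      R * ((M * p) / (M * p - 1) * (M * p) ^ m) := by
  have hmaps : ∀ x ∈ (wordsN M n).filter (fun x => mm T x ≤ m),
      mm T x ∈ Finset.range (m + 1) := by
    intro x hx
    rw [Finset.mem_filter] at hx
    rw [Finset.mem_range]; omega
  rw [← Finset.sum_fiberwise_of_maps_to hmaps]
  calc _ ≤ ∑ i ∈ Finset.range (m + 1), (R : ℝ) * (M * p) ^ i := by
        refine Finset.sum_le_sum fun i _ => ?_
        calc _ = ∑ x ∈ ((wordsN M n).filter (fun x => mm T x ≤ m)).filter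
                  (fun x => mm T x = i), p ^ i := by
              refine Finset.sum_congr rfl fun x hx => ?_
              rw [(Finset.mem_filter.1 hx).2]
          _ = ((((wordsN M n).filter (fun x => mm T x ≤ m)).filter
                  (fun x => mm T x = i)).card : ℝ) * p ^ i := by
              rw [Finset.sum_const, nsmul_eq_mul]
          _ ≤ ((R * M ^ i : ℕ) : ℝ) * p ^ i := by
              gcongr
              refine le_trans (Finset.card_le_card ?_) (count_le (n := n) (m := i) hM hR hT)
              intro x hx
              simp only [Finset.mem_filter] at hx ⊢
              exact ⟨hx.1.1, hx.2.le⟩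
          _ = _ := by push_cast; rw [mul_pow]; ring
    _ = R * ∑ i ∈ Finset.range (m + 1), (M * p) ^ i := by rw [Finset.mul_sum]
    _ ≤ _ := by gcongr; exact geom_bound hMp m

/-- Integer value of a word. -/
def vl {M : ℕ} (w : List (Fin M)) : ℕ := Nat.ofDigits M (w.reverse.map Fin.val)

lemma vl_inj {M n : ℕ} (hM : 2 ≤ M) {w w' : List (Fin M)} (h : w.length = n)
    (h' : w'.length = n) (e : vl w = vl w') : w = w' := by
  have := Nat.ofDigits_inj_of_len_eq (b := M) (by omega)
    (L1 := w.reverse.map Fin.val) (L2 := w'.reverse.map Fin.val)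
    (by simp [h, h']) (by simp) (by simp) e
  have h2 := List.map_injective_iff.2 Fin.val_injective this
  exact List.reverse_injective h2

lemma base1_eq {M : ℕ} (hM : 2 ≤ M) (w : List (Fin M)) :
    base1 M w * (M : ℝ) ^ w.length = vl w := by
  have hM0 : (M : ℝ) ≠ 0 := by positivity
  induction w with
  | nil => simp [base1, vl]
  | cons x w ih =>
    have h1 : base1 M (x :: w) = ((x : ℕ) : ℝ) * (M : ℝ)⁻¹ + base1 M w * (M : ℝ)⁻¹ := by
      unfold base1
      rw [Finset.sum_mul]
      simp only [List.length_cons]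
      rw [Fin.sum_univ_succ]
      congr 1
      · simp
      · refine Finset.sum_congr rfl fun j _ => ?_
        simp only [List.get_eq_getElem, Fin.val_succ, List.getElem_cons_succ]
        rw [mul_assoc, ← zpow_sub_one₀ hM0]
        congr 2
        push_cast; ring
    have h2 : vl (x :: w) = vl w + M ^ w.length * x := by
      simp [vl, Nat.ofDigits_append]
    rw [h1, h2]
    push_cast
    rw [← ih, List.length_cons, pow_succ]
    field_simp
    ring

lemma fiber_card {M n D : ℕ} (hM : 2 ≤ M) (F : Finset (List (Fin M)))
    (hF : ∀ x ∈ F, x.length = n)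
    (hd : ∀ x ∈ F, ∀ y ∈ F, vl x ≤ vl y + D) : F.card ≤ 2 * D + 1 := by
  rcases F.eq_empty_or_nonempty with rfl | ⟨y, hy⟩
  · simp
  have : F.card ≤ (Finset.Icc (vl y - D) (vl y + D)).card := by
    refine Finset.card_le_card_of_injOn vl ?_ ?_
    · intro x hx
      have h1 := hd x hx y hy
      have h2 := hd y hy x hx
      simp only [Finset.coe_Icc, Set.mem_Icc]
      omega
    · intro x hx z hz e
      exact vl_inj hM (hF x hx) (hF z hz) e
  rw [Nat.card_Icc] at this
  omega

lemma sum_biUnion_le_aux {α β : Type*} [DecidableEq α] [DecidableEq β] (s : Finset α)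
    (t : α → Finset β) (f : β → ℝ) (hf : ∀ x, 0 ≤ f x) :
    ∑ x ∈ s.biUnion t, f x ≤ ∑ i ∈ s, ∑ x ∈ t i, f x := by
  induction s using Finset.induction_on with
  | empty => simp
  | insert i s hi ih =>
    rw [Finset.biUnion_insert, Finset.sum_insert hi]
    have := Finset.sum_union_inter (s₁ := t i) (s₂ := s.biUnion t) (f := f)
    have h2 : 0 ≤ ∑ x ∈ t i ∩ s.biUnion t, f x := Finset.sum_nonneg fun x _ => hf x
    linarith

/-- The slab of words around `w`, with `j`-th coordinate fixed. -/
def slab (d M n : ℕ) (a : Fin d → ℝ) (j : Fin d) (w : Fin d → List (Fin M)) :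
    Finset (Fin d → List (Fin M)) :=
  open Classical in
  (Fintype.piFinset fun _ => wordsN M n).filter (fun w' => w' j = w j ∧
    |∑ i, a i * (vl (w' i) : ℝ) - ∑ i, a i * (vl (w i) : ℝ)| ≤ ∑ i, a i)

lemma mem_slab {d M n : ℕ} {a : Fin d → ℝ} {j : Fin d} {w w' : Fin d → List (Fin M)} :
    w' ∈ slab d M n a j w ↔ (∀ i, (w' i).length = n) ∧ w' j = w j ∧
    |∑ i, a i * (vl (w' i) : ℝ) - ∑ i, a i * (vl (w i) : ℝ)| ≤ ∑ i, a i := by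
  simp [slab, mem_wordsN]

lemma slab_fiber {d M n D : ℕ} (hM : 2 ≤ M) {a : Fin d → ℝ} (ha : ∀ i, 0 < a i)
    (hD : ∀ i, 2 * (∑ i, a i) ≤ a i * D) (j i0 : Fin d) (w : Fin d → List (Fin M))
    (W : Finset (Fin d → List (Fin M))) (hW : W ⊆ slab d M n a j w)
    (v : Fin d → List (Fin M)) :
    (W.filter (fun w' => Function.update w' i0 [] = v)).card ≤ 2 * D + 1 := by
  set F := W.filter (fun w' => Function.update w' i0 [] = v) with hF
  have hagree : ∀ x ∈ F, ∀ y ∈ F, ∀ i, i ≠ i0 → x i = y i := by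
    intro x hx y hy i hi
    have h1 := (Finset.mem_filter.1 hx).2
    have h2 := (Finset.mem_filter.1 hy).2
    have h3 := congrFun (h1.trans h2.symm) i
    simpa [hi] using h3
  have hinj : Set.InjOn (fun x : Fin d → List (Fin M) => x i0) (F : Set _) := by
    intro x hx y hy e
    funext i
    by_cases hi : i = i0
    · subst hi; exact e
    · exact hagree x hx y hy i hi
  rw [← Finset.card_image_of_injOn hinj]
  refine fiber_card (n := n) hM _ ?_ ?_
  · intro z hz
    obtain ⟨x, hx, rfl⟩ := Finset.mem_image.1 hz
    exact (mem_slab.1 (hW (Finset.mem_filter.1 hx).1)).1 i0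
  · intro z hz z' hz'
    obtain ⟨x, hx, rfl⟩ := Finset.mem_image.1 hz
    obtain ⟨y, hy, rfl⟩ := Finset.mem_image.1 hz'
    have h1 := abs_le.1 (mem_slab.1 (hW (Finset.mem_filter.1 hx).1)).2.2
    have h2 := abs_le.1 (mem_slab.1 (hW (Finset.mem_filter.1 hy).1)).2.2
    have e : ∑ i, a i * (vl (x i) : ℝ) - ∑ i, a i * (vl (y i) : ℝ) =
        a i0 * ((vl (x i0) : ℝ) - vl (y i0)) := by
      rw [← Finset.sum_sub_distrib, Finset.sum_eq_single i0]
      · ring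
      · intro i _ hi
        rw [hagree x hx y hy i hi]; ring
      · simp
    have h3 := hD i0
    have h4 : a i0 * ((vl (x i0) : ℝ) - vl (y i0)) ≤ a i0 * D := by
      rw [← e]; linarith [h1.1, h1.2, h2.1, h2.2]
    have h5 := le_of_mul_le_mul_left h4 (ha i0)
    have h6 : (vl (x i0) : ℝ) ≤ vl (y i0) + D := by linarith
    exact_mod_cast h6

lemma innr_sum {d M n D R m : ℕ} (hd : 2 ≤ d) (hM : 2 ≤ M) {a : Fin d → ℝ} (ha : ∀ i, 0 < a i)
    (hD : ∀ i, 2 * (∑ i, a i) ≤ a i * D) {p : Fin d → ℝ} (hp : ∀ i, 0 < p i)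
    (hMp : ∀ i, 1 < M * p i) {C1 : ℝ} (hC1 : ∀ i, (M * p i) / (M * p i - 1) ≤ C1)
    (j i0 : Fin d) (hij : i0 ≠ j) (w : Fin d → List (Fin M))
    (L : Fin d → Finset (List (Fin M))) (hR : 1 ≤ R) (hL : ∀ i, (L i).card ≤ R)
    (W : Finset (Fin d → List (Fin M))) (hW : W ⊆ slab d M n a j w)
    (hWm : ∀ w' ∈ W, mm (L i0) (w' i0) = m ∧ ∀ i, i ≠ j → mm (L i) (w' i) ≤ m) :
    ∑ w' ∈ W, ∏ i ∈ Finset.univ.erase j, p i ^ mm (L i) (w' i) ≤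
      (2 * D + 1 : ℕ) * (R * C1) ^ (d - 2) *
        ((M : ℝ) ^ (d - 2) * ∏ i ∈ Finset.univ.erase j, p i) ^ m := by
  classical
  have hi0 : i0 ∈ Finset.univ.erase j := by simp [hij]
  set J : Finset (Fin d) := (Finset.univ.erase j).erase i0 with hJ
  have hJmem : ∀ i, i ∈ J ↔ i ≠ i0 ∧ i ≠ j := by intro i; simp [hJ]
  have hJcard : J.card = d - 2 := by
    rw [hJ, Finset.card_erase_of_mem hi0, Finset.card_erase_of_mem (Finset.mem_univ _)]
    simp; omega
  let V : Fin d → Finset (List (Fin M)) := fun i =>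
    if i = i0 then {[]} else if i = j then {w j} else
      (wordsN M n).filter (fun x => mm (L i) x ≤ m)
  let h : Fin d → List (Fin M) → ℝ := fun i x => if i ∈ J then p i ^ mm (L i) x else 1
  have hh0 : ∀ i x, 0 ≤ h i x := by
    intro i x; simp only [h]; split_ifs
    · exact (pow_pos (hp i) _).le
    · exact zero_le_one
  have hmaps : ∀ w' ∈ W, Function.update w' i0 [] ∈ Fintype.piFinset V := by
    intro w' hw'
    rw [Fintype.mem_piFinset]
    intro i
    have hs := mem_slab.1 (hW hw')
    by_cases h1 : i = i0
    · subst h1; simp [V]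
    · by_cases h2 : i = j
      · subst h2; simp [V, h1, hs.2.1]
      · simp [V, h1, h2, mem_wordsN, hs.1 i, (hWm w' hw').2 i h2]
  have hterm : ∀ w' ∈ W, ∏ i ∈ Finset.univ.erase j, p i ^ mm (L i) (w' i) =
      p i0 ^ m * ∏ i, h i (Function.update w' i0 [] i) := by
    intro w' hw'
    rw [← Finset.mul_prod_erase _ _ hi0, (hWm w' hw').1]
    congr 1
    rw [← Finset.prod_subset (Finset.subset_univ J)]
    · refine Finset.prod_congr rfl fun i hi => ?_
      have := (hJmem i).1 hi
      simp [h, hi, this.1]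
    · intro i _ hi
      simp [h, hi]
  have hVsum : ∀ i, ∑ x ∈ V i, h i x ≤ if i ∈ J then R * (C1 * (M * p i) ^ m) else 1 := by
    intro i
    by_cases hi : i ∈ J
    · have := (hJmem i).1 hi
      simp only [V, h, hi, this.1, this.2, if_true, if_false]
      refine (one_coord hM hR (hL i) (hp i) (hMp i)).trans ?_
      have := hC1 i
      have := (zero_lt_one.trans (hMp i)).le
      gcongr
    · simp only [h, hi, if_false]
      have : i = i0 ∨ i = j := by
        by_contra hc; push Not at hc; exact hi ((hJmem i).2 hc)
      by_cases h1 : i = i0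
      · simp [V, h1]
      · have h2 := this.resolve_left h1
        simp [V, h2, hij.symm]
  calc _ = ∑ w' ∈ W, p i0 ^ m * ∏ i, h i (Function.update w' i0 [] i) :=
        Finset.sum_congr rfl hterm
    _ = p i0 ^ m * ∑ w' ∈ W, ∏ i, h i (Function.update w' i0 [] i) := by rw [Finset.mul_sum]
    _ ≤ p i0 ^ m * ∑ v ∈ Fintype.piFinset V, (2 * D + 1 : ℕ) * ∏ i, h i (v i) := by
        have := (hp i0).le
        gcongr
        rw [← Finset.sum_fiberwise_of_maps_to hmaps]
        refine Finset.sum_le_sum fun v _ => ?_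
        calc _ = ∑ w' ∈ W.filter (fun w' => Function.update w' i0 [] = v), ∏ i, h i (v i) := by
              refine Finset.sum_congr rfl fun x hx => ?_
              rw [(Finset.mem_filter.1 hx).2]
          _ ≤ _ := by
              rw [Finset.sum_const, nsmul_eq_mul]
              have : 0 ≤ ∏ i, h i (v i) := Finset.prod_nonneg fun i _ => hh0 i _
              gcongr
              exact slab_fiber hM ha hD j i0 w W hW v
    _ = p i0 ^ m * ((2 * D + 1 : ℕ) * ∏ i, ∑ x ∈ V i, h i x) := by
        rw [← Finset.mul_sum, Finset.prod_univ_sum]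
    _ ≤ p i0 ^ m * ((2 * D + 1 : ℕ) *
          ∏ i, if i ∈ J then R * (C1 * (M * p i) ^ m) else 1) := by
        have := (hp i0).le
        gcongr with i _
        · intro i _; exact Finset.sum_nonneg fun x _ => hh0 i x
        · exact hVsum i
    _ = p i0 ^ m * ((2 * D + 1 : ℕ) * ∏ i ∈ J, R * (C1 * (M * p i) ^ m)) := by
        rw [Finset.prod_ite_mem, Finset.univ_inter]
    _ = _ := by
        rw [← Finset.mul_prod_erase _ p hi0, ← hJ]
        simp only [← mul_assoc]
        rw [Finset.prod_mul_distrib, Finset.prod_const, hJcard, Finset.prod_pow,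
          Finset.prod_mul_distrib, Finset.prod_const, hJcard]
        simp only [mul_pow]
        ring

lemma weight_sum {d M n D R : ℕ} (hd : 2 ≤ d) (hM : 2 ≤ M) {a : Fin d → ℝ} (ha : ∀ i, 0 < a i)
    (hD : ∀ i, 2 * (∑ i, a i) ≤ a i * D) {p : Fin d → ℝ} (hp : ∀ i, 0 < p i)
    (hMp : ∀ i, 1 < M * p i) {C1 : ℝ} (hC10 : 0 ≤ C1)
    (hC1 : ∀ i, (M * p i) / (M * p i - 1) ≤ C1)
    (j : Fin d) {Q : ℝ} (hQ : Q = (M : ℝ) ^ (d - 2) * ∏ i ∈ Finset.univ.erase j, p i)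
    (hQ1 : Q < 1) (w : Fin d → List (Fin M))
    (L : Fin d → Finset (List (Fin M))) (hR : 1 ≤ R) (hL : ∀ i, (L i).card ≤ R) :
    ∑ w' ∈ slab d M n a j w, ∏ i ∈ Finset.univ.erase j, p i ^ mm (L i) (w' i) ≤
      (d * ((2 * D + 1 : ℕ) * C1 ^ (d - 2) * (1 - Q)⁻¹)) * (R : ℝ) ^ (d - 2) := by
  classical
  have hQ0 : 0 ≤ Q := by
    rw [hQ]; exact mul_nonneg (by positivity) (Finset.prod_nonneg fun i _ => (hp i).le)
  set S := slab d M n a j w with hS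
  have hpos : ∀ w' : Fin d → List (Fin M),
      0 ≤ ∏ i ∈ Finset.univ.erase j, p i ^ mm (L i) (w' i) :=
    fun w' => Finset.prod_nonneg fun i _ => (pow_pos (hp i) _).le
  let G : Fin d → ℕ → Finset (Fin d → List (Fin M)) := fun i0 m =>
    S.filter (fun w' => mm (L i0) (w' i0) = m ∧ ∀ i, i ≠ j → mm (L i) (w' i) ≤ m)
  have hbd : ∃ B, ∀ w' ∈ S, ∀ i, mm (L i) (w' i) ≤ B := by
    refine ⟨S.sup fun w' => Finset.univ.sup fun i => mm (L i) (w' i), fun w' hw' i => ?_⟩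
    have e1 : mm (L i) (w' i) ≤ Finset.univ.sup fun i => mm (L i) (w' i) :=
      Finset.le_sup (f := fun i => mm (L i) (w' i)) (Finset.mem_univ i)
    have e2 := Finset.le_sup (f := fun w' : Fin d → List (Fin M) =>
      Finset.univ.sup fun i => mm (L i) (w' i)) hw'
    exact e1.trans e2
  obtain ⟨B, hB⟩ := hbd
  have hne : (Finset.univ.erase j).Nonempty := by
    rw [← Finset.card_pos, Finset.card_erase_of_mem (Finset.mem_univ _)]
    simp; omega
  have hcover : S ⊆ ((Finset.univ.erase j) ×ˢ Finset.range (B + 1)).biUnion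
      (fun q => G q.1 q.2) := by
    intro w' hw'
    obtain ⟨i0, hi0, hmax⟩ := Finset.exists_max_image (Finset.univ.erase j)
      (fun i => mm (L i) (w' i)) hne
    rw [Finset.mem_biUnion]
    refine ⟨(i0, mm (L i0) (w' i0)), ?_, ?_⟩
    · rw [Finset.mem_product, Finset.mem_range]
      exact ⟨hi0, Nat.lt_succ_of_le (hB w' hw' i0)⟩
    · simp only [G, Finset.mem_filter]
      exact ⟨hw', trivial, fun i hi => hmax i (by simp [hi])⟩
  calc _ ≤ ∑ w' ∈ ((Finset.univ.erase j) ×ˢ Finset.range (B + 1)).biUnion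
          (fun q => G q.1 q.2), ∏ i ∈ Finset.univ.erase j, p i ^ mm (L i) (w' i) :=
        Finset.sum_le_sum_of_subset_of_nonneg hcover (fun w' _ _ => hpos w')
    _ ≤ ∑ q ∈ ((Finset.univ.erase j) ×ˢ Finset.range (B + 1)),
        ∑ w' ∈ G q.1 q.2, ∏ i ∈ Finset.univ.erase j, p i ^ mm (L i) (w' i) := by
        exact sum_biUnion_le_aux _ _ _ hpos
    _ ≤ ∑ q ∈ ((Finset.univ.erase j) ×ˢ Finset.range (B + 1)),
        (2 * D + 1 : ℕ) * (R * C1) ^ (d - 2) * Q ^ q.2 := by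
        refine Finset.sum_le_sum fun q hq => ?_
        rw [Finset.mem_product] at hq
        rw [hQ]
        refine innr_sum hd hM ha hD hp hMp hC1 j q.1 (Finset.ne_of_mem_erase hq.1) w L hR hL _
          (Finset.filter_subset _ _) ?_
        intro w' hw'
        exact (Finset.mem_filter.1 hw').2
    _ = ((Finset.univ.erase j).card : ℝ) * ((2 * D + 1 : ℕ) * (R * C1) ^ (d - 2) *
          ∑ m ∈ Finset.range (B + 1), Q ^ m) := by
        rw [Finset.sum_product]
        simp only [Finset.sum_const, nsmul_eq_mul, ← Finset.mul_sum]
    _ ≤ (d : ℝ) * ((2 * D + 1 : ℕ) * (R * C1) ^ (d - 2) * (1 - Q)⁻¹) := by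
        have h1 : ((Finset.univ.erase j).card : ℝ) ≤ d := by
          have := Finset.card_erase_le (s := (Finset.univ : Finset (Fin d))) (a := j)
          simp only [Finset.card_univ, Fintype.card_fin] at this
          exact_mod_cast this
        have h2 : ∑ m ∈ Finset.range (B + 1), Q ^ m ≤ (1 - Q)⁻¹ := by
          rw [← tsum_geometric_of_lt_one hQ0 hQ1]
          exact (summable_geometric_of_lt_one hQ0 hQ1).sum_le_tsum _ (fun i _ => pow_nonneg hQ0 i)
        have h3 : 0 ≤ ∑ m ∈ Finset.range (B + 1), Q ^ m :=
          Finset.sum_nonneg fun i _ => pow_nonneg hQ0 i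
        gcongr
    _ = _ := by rw [mul_pow]; ring

/-- All prefixes of the words in `L` carry label one. -/
def ev {d M : ℕ} (L : Fin d → Finset (List (Fin M))) : Set (Fin d → Perc1 M) :=
  {ω | ∀ i, ∀ u ∈ UU (L i), ω i u = true}

lemma measurableSet_ev {d M : ℕ} (L : Fin d → Finset (List (Fin M))) :
    MeasurableSet (ev L) := by
  have : ev L = ⋂ i, ⋂ u ∈ UU (L i), {ω : Fin d → Perc1 M | ω i u = true} := by
    ext ω; simp [ev]
  rw [this]
  refine MeasurableSet.iInter fun i => Finset.measurableSet_biInter _ fun u _ => ?_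
  have hm : Measurable (fun ω : Fin d → Perc1 M => ω i u) :=
    (measurable_pi_apply u).comp (measurable_pi_apply i)
  exact hm (measurableSet_singleton true)

lemma prob_ev {d M : ℕ} {p : Fin d → ℝ} (hp : ∀ i, 0 < p i) {P : Measure (Fin d → Perc1 M)}
    (hP : IsIndepBernoulli1 d M p P) (L : Fin d → Finset (List (Fin M))) :
    P (ev L) = ENNReal.ofReal (∏ i, p i ^ (UU (L i)).card) := by
  classical
  let S : Finset (Fin d × Word1 M) :=
    (Finset.univ ×ˢ (Finset.univ.biUnion fun i => UU (L i))).filter (fun q => q.2 ∈ UU (L q.1))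
  have hS : ∀ q : Fin d × Word1 M, q ∈ S ↔ q.1 ∈ (Finset.univ : Finset (Fin d)) ∧
      q.2 ∈ UU (L q.1) := by
    intro q
    simp only [S, Finset.mem_filter, Finset.mem_product, Finset.mem_univ, true_and,
      Finset.mem_biUnion]
    exact ⟨fun h => h.2, fun h => ⟨⟨q.1, h⟩, h⟩⟩
  have h1 : ev L = {ω | ∀ q ∈ S, ω q.1 q.2 = (fun _ => true) q} := by
    ext ω
    simp only [ev, Set.mem_ofPred_eq]
    constructor
    · intro h q hq; exact h q.1 q.2 ((hS q).1 hq).2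
    · intro h i u hu; exact h (i, u) ((hS (i, u)).2 ⟨Finset.mem_univ _, hu⟩)
  rw [h1, hP.2 S (fun _ => true), Finset.prod_finset_product S Finset.univ (fun i => UU (L i)) hS,
    ENNReal.ofReal_prod_of_nonneg (fun i _ => (pow_pos (hp i) _).le)]
  refine Finset.prod_congr rfl fun i _ => ?_
  simp [ENNReal.ofReal_pow (hp i).le]

/-- Add the word tuple `w` (except its `j`-th coordinate) to `L`. -/
def addw {d M : ℕ} (j : Fin d) (w : Fin d → List (Fin M)) (L : Fin d → Finset (List (Fin M))) :
    Fin d → Finset (List (Fin M)) := fun i => if i = j then L i else insert (w i) (L i)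

lemma UU_insert {M : ℕ} (x : List (Fin M)) (T : Finset (List (Fin M))) :
    UU (insert x T) = UU {x} ∪ UU T := by
  ext u
  rw [Finset.mem_union, mem_UU, mem_UU, mem_UU]
  simp

lemma UU_empty {M : ℕ} : UU (∅ : Finset (List (Fin M))) = ∅ := by
  ext u; simp [mem_UU]

lemma card_UU_insert {M : ℕ} (x : List (Fin M)) (T : Finset (List (Fin M))) :
    (UU (insert x T)).card = mm T x + (UU T).card := by
  rw [UU_insert, mm, Finset.card_sdiff_add_card]

lemma ev_addw {d M : ℕ} (j : Fin d) (w : Fin d → List (Fin M))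
    (L : Fin d → Finset (List (Fin M))) :
    ev (addw j w L) = ev L ∩ ev (addw j w fun _ => ∅) := by
  ext ω
  simp only [ev, Set.mem_inter_iff, Set.mem_ofPred_eq, ← forall_and]
  refine forall_congr' fun i => ?_
  by_cases h : i = j
  · simp [addw, h, UU_empty]
  · simp only [addw, h, if_false, UU_insert, UU_empty, Finset.mem_union, Finset.notMem_empty,
      or_false]
    exact ⟨fun h u => ⟨fun hu => h u (Or.inr hu), fun hu => h u (Or.inl hu)⟩,
      fun h u hu => hu.elim (h u).2 (h u).1⟩

lemma mem_ev_addw {d M : ℕ} (j : Fin d) (w : Fin d → List (Fin M)) (ω : Fin d → Perc1 M)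
    (h : ∀ i, Retained1 M (ω i) (w i)) : ω ∈ ev (addw j w fun _ => ∅) := by
  intro i u hu
  by_cases hi : i = j
  · simp [addw, hi, UU_empty] at hu
  · simp only [addw, hi, if_false] at hu
    obtain ⟨v, hv, hpre⟩ := mem_UU.1 hu
    simp at hv
    subst hv
    exact h i u.1 u.2 hpre

lemma g_addw {d M : ℕ} (p : Fin d → ℝ) (j : Fin d) (w : Fin d → List (Fin M))
    (L : Fin d → Finset (List (Fin M))) :
    ∏ i, p i ^ (UU (addw j w L i)).card =
      (∏ i, p i ^ (UU (L i)).card) * ∏ i ∈ Finset.univ.erase j, p i ^ mm (L i) (w i) := by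
  rw [← Finset.mul_prod_erase _ _ (Finset.mem_univ j),
    ← Finset.mul_prod_erase _ (fun i => p i ^ (UU (L i)).card) (Finset.mem_univ j), mul_assoc,
    ← Finset.prod_mul_distrib]
  congr 1
  · simp [addw]
  · refine Finset.prod_congr rfl fun i hi => ?_
    have := Finset.ne_of_mem_erase hi
    simp only [addw, this, if_false, card_UU_insert]
    rw [pow_add, mul_comm]

/-- Counting function. -/
def XX {d M : ℕ} (j : Fin d) (W : Finset (Fin d → List (Fin M))) (ω : Fin d → Perc1 M) : ℝ≥0∞ :=
  ∑ w ∈ W, (ev (addw j w fun _ => ∅)).indicator 1 ω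

lemma measurable_XX {d M : ℕ} (j : Fin d) (W : Finset (Fin d → List (Fin M))) :
    Measurable (XX j W) := by
  unfold XX
  exact Finset.measurable_sum _ fun w _ => measurable_one.indicator (measurableSet_ev _)

lemma moment {d M : ℕ} {p : Fin d → ℝ} (hp : ∀ i, 0 < p i) {P : Measure (Fin d → Perc1 M)}
    (hP : IsIndepBernoulli1 d M p P) (j : Fin d) (W : Finset (Fin d → List (Fin M)))
    (R : ℕ) (K : ℝ) (hK0 : 0 ≤ K)
    (hK : ∀ L : Fin d → Finset (List (Fin M)), 1 ≤ R → (∀ i, (L i).card ≤ R) →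
      ∑ w ∈ W, ∏ i ∈ Finset.univ.erase j, p i ^ mm (L i) (w i) ≤ K) (r : ℕ) :
    ∀ L : Fin d → Finset (List (Fin M)), (∀ i, (L i).card + r ≤ R) →
      ∫⁻ ω in ev L, XX j W ω ^ r ∂P ≤
        ENNReal.ofReal (∏ i, p i ^ (UU (L i)).card) * ENNReal.ofReal K ^ r := by
  induction r with
  | zero =>
    intro L _
    simp [prob_ev hp hP]
  | succ r ih =>
    intro L hL
    have hg : ∀ L : Fin d → Finset (List (Fin M)), 0 ≤ ∏ i, p i ^ (UU (L i)).card :=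
      fun L => Finset.prod_nonneg fun i _ => (pow_pos (hp i) _).le
    have hR : 1 ≤ R := by have := hL j; omega
    calc ∫⁻ ω in ev L, XX j W ω ^ (r + 1) ∂P
        = ∫⁻ ω in ev L, ∑ w ∈ W, (ev (addw j w fun _ => ∅)).indicator
            (fun ω => XX j W ω ^ r) ω ∂P := by
          refine lintegral_congr fun ω => ?_
          rw [pow_succ]
          conv_lhs => rw [XX.eq_def j W ω, ← XX.eq_def j W ω]
          rw [show XX j W ω ^ r * XX j W ω = XX j W ω ^ r *
            ∑ w ∈ W, (ev (addw j w fun _ => ∅)).indicator 1 ω from rfl, Finset.mul_sum]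
          refine Finset.sum_congr rfl fun w _ => ?_
          by_cases h : ω ∈ ev (addw j w fun _ => ∅) <;> simp [h]
      _ = ∑ w ∈ W, ∫⁻ ω in ev L, (ev (addw j w fun _ => ∅)).indicator
            (fun ω => XX j W ω ^ r) ω ∂P := by
          refine lintegral_finsetSum _ fun w _ => ?_
          exact ((measurable_XX j W).pow_const r).indicator (measurableSet_ev _)
      _ = ∑ w ∈ W, ∫⁻ ω in ev (addw j w L), XX j W ω ^ r ∂P := by
          refine Finset.sum_congr rfl fun w _ => ?_
          rw [lintegral_indicator (measurableSet_ev _),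
            Measure.restrict_restrict (measurableSet_ev _), ev_addw j w L, Set.inter_comm]
      _ ≤ ∑ w ∈ W, ENNReal.ofReal (∏ i, p i ^ (UU (addw j w L i)).card) *
            ENNReal.ofReal K ^ r := by
          refine Finset.sum_le_sum fun w _ => ih _ fun i => ?_
          have h1 := hL i
          have h2 := Finset.card_insert_le (w i) (L i)
          unfold addw
          split_ifs <;> omega
      _ = ENNReal.ofReal ((∏ i, p i ^ (UU (L i)).card) *
            ∑ w ∈ W, ∏ i ∈ Finset.univ.erase j, p i ^ mm (L i) (w i)) *
            ENNReal.ofReal K ^ r := by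
          rw [← Finset.sum_mul, ← ENNReal.ofReal_sum_of_nonneg (fun w _ => hg _), Finset.mul_sum]
          simp only [g_addw]
      _ ≤ ENNReal.ofReal ((∏ i, p i ^ (UU (L i)).card) * K) * ENNReal.ofReal K ^ r := by
          gcongr
          · exact hg L
          · exact hK L hR fun i => by have := hL i; omega
      _ = _ := by
          rw [ENNReal.ofReal_mul (hg L), pow_succ]; ring

lemma tail {d M : ℕ} {p : Fin d → ℝ} (hp : ∀ i, 0 < p i) {P : Measure (Fin d → Perc1 M)}
    (hP : IsIndepBernoulli1 d M p P) (j : Fin d) (W : Finset (Fin d → List (Fin M)))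
    (R : ℕ) (K : ℝ) (hK0 : 0 < K)
    (hK : ∀ L : Fin d → Finset (List (Fin M)), 1 ≤ R → (∀ i, (L i).card ≤ R) →
      ∑ w ∈ W, ∏ i ∈ Finset.univ.erase j, p i ^ mm (L i) (w i) ≤ K) (b : ℝ) (hb : 0 < b) :
    P {ω | ENNReal.ofReal (K * b) ≤ XX j W ω} ≤ ENNReal.ofReal ((b ^ R)⁻¹) := by
  have h1 := moment hp hP j W R K hK0.le hK R (fun _ => ∅) (by simp)
  have h0 : ev (fun _ => ∅ : Fin d → Finset (List (Fin M))) = Set.univ := by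
    ext ω; simp [ev, UU_empty]
  rw [h0, Measure.restrict_univ] at h1
  simp only [UU_empty, Finset.card_empty, pow_zero, Finset.prod_const_one, ENNReal.ofReal_one,
    one_mul] at h1
  have h2 := mul_meas_ge_le_lintegral (μ := P) ((measurable_XX j W).pow_const R)
    (ENNReal.ofReal (K * b) ^ R)
  have h3 : P {ω | ENNReal.ofReal (K * b) ≤ XX j W ω} ≤
      P {ω | ENNReal.ofReal (K * b) ^ R ≤ XX j W ω ^ R} :=
    measure_mono fun ω hω => by
      rw [Set.mem_ofPred_eq] at hω ⊢
      exact pow_le_pow_left' hω R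
  have hkb : 0 < K * b := mul_pos hK0 hb
  have h4 : P {ω | ENNReal.ofReal (K * b) ≤ XX j W ω} * ENNReal.ofReal (K * b) ^ R ≤
      ENNReal.ofReal K ^ R := by
    rw [mul_comm]
    exact le_trans (by gcongr) (h2.trans h1)
  rw [← ENNReal.ofReal_pow hkb.le, ← ENNReal.ofReal_pow hK0.le] at h4
  have h5 := (ENNReal.le_div_iff_mul_le (Or.inl (by simpa using pow_pos hkb R))
    (Or.inl ENNReal.ofReal_ne_top)).2 h4
  rw [← ENNReal.ofReal_div_of_pos (pow_pos hkb R)] at h5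
  refine h5.trans (ENNReal.ofReal_le_ofReal (le_of_eq ?_))
  rw [mul_pow]
  have := (pow_pos hK0 R).ne'
  field_simp

/-- under `∏ pᵢ > M^{-(d-1)}` and `∏_{i≠j} pᵢ < M^{-(d-2)}`, there
is a constant `C` such that almost surely (given all `E⁽ⁱ⁾ ≠ ∅`), for all large
`n`, each cube of `Ẽ_n` met by a hyperplane `H_t` shares a coordinate word with
at most `C n^{(1+ε)(d-2)}` other cubes of `Ẽ_n` met by `H_t`. -/
theorem dependent_cube_count
    (d M : ℕ) (hd : 2 ≤ d) (hM : 2 ≤ M)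
    (p : Fin d → ℝ) (hp0 : ∀ i, 0 < p i) (hp1 : ∀ i, p i ≤ 1)
    (hprod : (M : ℝ) ^ (1 - (d : ℤ)) < ∏ i, p i)
    (hprod2 : ∀ j, ∏ i ∈ Finset.univ.erase j, p i < (M : ℝ) ^ (2 - (d : ℤ)))
    (P : Measure (Fin d → Perc1 M)) (hP : IsIndepBernoulli1 d M p P)
    (a : Fin d → ℝ) (ha : ∀ i, 0 < a i) (hnorm : ∑ i, a i ^ 2 = 1)
    (ε : ℝ) (hε : 0 < ε) :
    ∃ C : ℝ, ∀ᵐ ω ∂(ProbabilityTheory.cond P {ω | ∀ i, limit1 M (ω i) ≠ ∅}),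
      ∃ N : ℕ, ∀ n > N, ∀ t : ℝ, ∀ w : Fin d → List (Fin M),
        (∀ i, (w i).length = n ∧ Retained1 M (ω i) (w i)) →
        (Hplane d a t ∩ prodCube d M w).Nonempty →
        (({w' : Fin d → List (Fin M) |
            (∀ i, (w' i).length = n ∧ Retained1 M (ω i) (w' i)) ∧ w' ≠ w ∧
            (Hplane d a t ∩ prodCube d M w').Nonempty ∧ ∃ i, w' i = w i}.ncard : ℝ)) ≤
          C * (n : ℝ) ^ ((1 + ε) * ((d : ℝ) - 2)) := by
  classical
  have hM0 : (0 : ℝ) < M := by positivity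
  have hA : 0 < ∑ i, a i := by
    have : Nonempty (Fin d) := ⟨⟨0, by omega⟩⟩
    exact Finset.sum_pos (fun i _ => ha i) Finset.univ_nonempty
  -- each `M p_i > 1`
  have hMp : ∀ i, 1 < (M : ℝ) * p i := by
    intro i
    have h1 := hprod
    rw [← Finset.mul_prod_erase _ _ (Finset.mem_univ i)] at h1
    have h2 := mul_lt_mul_of_pos_left (hprod2 i) (hp0 i)
    have h3 : (M : ℝ) ^ (1 - (d : ℤ)) * M = (M : ℝ) ^ (2 - (d : ℤ)) := by
      rw [← zpow_add_one₀ hM0.ne']; congr 1; ring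
    have hz : (0 : ℝ) < (M : ℝ) ^ (1 - (d : ℤ)) := zpow_pos hM0 _
    have h4 := h1.trans h2
    rw [← h3] at h4
    by_contra hc
    push Not at hc
    nlinarith [mul_le_mul_of_nonneg_left hc hz.le]
  let Q : Fin d → ℝ := fun j => (M : ℝ) ^ (d - 2) * ∏ i ∈ Finset.univ.erase j, p i
  have hQ1 : ∀ j, Q j < 1 := by
    intro j
    have h1 := hprod2 j
    have h2 : (M : ℝ) ^ (2 - (d : ℤ)) = ((M : ℝ) ^ (d - 2))⁻¹ := by
      rw [← zpow_natCast, ← zpow_neg]; congr 1; omega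
    rw [h2] at h1
    have hz : (0 : ℝ) < (M : ℝ) ^ (d - 2) := by positivity
    have h3 := mul_lt_mul_of_pos_left h1 hz
    rwa [mul_inv_cancel₀ hz.ne'] at h3
  obtain ⟨D, hD⟩ : ∃ D : ℕ, ∀ i, 2 * (∑ i, a i) ≤ a i * D := by
    obtain ⟨D, hD⟩ := exists_nat_ge (∑ i, 2 * (∑ i, a i) / a i)
    refine ⟨D, fun i => ?_⟩
    have h1 : 2 * (∑ i, a i) / a i ≤ ∑ i, 2 * (∑ i, a i) / a i :=
      Finset.single_le_sum (f := fun i => 2 * (∑ i, a i) / a i)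
        (fun k _ => div_nonneg (by linarith) (ha k).le) (Finset.mem_univ i)
    have h2 := (div_le_iff₀ (ha i)).1 (h1.trans hD)
    linarith
  have hrat : ∀ i, 0 ≤ (M * p i) / (M * p i - 1) := fun i =>
    div_nonneg (by linarith [hMp i]) (by linarith [hMp i])
  let C1 : ℝ := 1 + ∑ i, (M * p i) / (M * p i - 1)
  have hC10 : 0 < C1 := by
    have : 0 ≤ ∑ i, (M * p i) / (M * p i - 1) := Finset.sum_nonneg fun i _ => hrat i
    simp only [C1]; linarith
  have hC1 : ∀ i, (M * p i) / (M * p i - 1) ≤ C1 := by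
    intro i
    have := Finset.single_le_sum (f := fun i => (M * p i) / (M * p i - 1))
      (fun k _ => hrat k) (Finset.mem_univ i)
    simp only [C1]; linarith
  let Kj : Fin d → ℝ := fun j => d * ((2 * D + 1 : ℕ) * C1 ^ (d - 2) * (1 - Q j)⁻¹)
  have hd0 : (0 : ℝ) < d := by positivity
  have hKj : ∀ j, 0 < Kj j := by
    intro j
    have h1 : 0 < (1 - Q j)⁻¹ := inv_pos.2 (by linarith [hQ1 j])
    simp only [Kj]
    positivity
  let K : ℝ := ∑ j, Kj j
  have hKle : ∀ j, Kj j ≤ K := fun j =>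
    Finset.single_le_sum (f := Kj) (fun k _ => (hKj k).le) (Finset.mem_univ j)
  have hK0 : 0 < K := (hKj ⟨0, by omega⟩).trans_le (hKle _)
  let b : ℝ := 2 * (M : ℝ) ^ d
  have hb : 0 < b := by positivity
  let Bad : ℕ → Set (Fin d → Perc1 M) := fun n =>
    ⋃ q ∈ (Finset.univ : Finset (Fin d)) ×ˢ (Fintype.piFinset fun _ : Fin d => wordsN M n),
      {ω | ENNReal.ofReal (K * (n : ℝ) ^ (d - 2) * b) ≤ XX q.1 (slab d M n a q.1 q.2) ω}
  have := hP.1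
  have hBad : ∀ n, P (Bad n) ≤ ENNReal.ofReal (d * (1 / 2 : ℝ) ^ n) := by
    intro n
    rcases Nat.eq_zero_or_pos n with rfl | hn
    · refine prob_le_one.trans ?_
      rw [ENNReal.one_le_ofReal]
      have : (2 : ℝ) ≤ d := by exact_mod_cast hd
      simp; linarith
    have hn' : (0 : ℝ) < n := by exact_mod_cast hn
    calc P (Bad n) ≤ ∑ q ∈ (Finset.univ : Finset (Fin d)) ×ˢ
            (Fintype.piFinset fun _ : Fin d => wordsN M n),
            P {ω | ENNReal.ofReal (K * (n : ℝ) ^ (d - 2) * b) ≤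
              XX q.1 (slab d M n a q.1 q.2) ω} := measure_biUnion_finset_le _ _
      _ ≤ ∑ q ∈ (Finset.univ : Finset (Fin d)) ×ˢ
            (Fintype.piFinset fun _ : Fin d => wordsN M n), ENNReal.ofReal ((b ^ n)⁻¹) := by
          refine Finset.sum_le_sum fun q _ => ?_
          refine tail hp0 hP q.1 _ n (K * (n : ℝ) ^ (d - 2)) (by positivity) ?_ b hb
          intro L hR hL
          refine (weight_sum hd hM ha hD hp0 hMp hC10.le hC1 q.1 rfl (hQ1 q.1) q.2 L hR hL).trans ?_
          exact mul_le_mul_of_nonneg_right (hKle q.1) (by positivity)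
      _ ≤ ENNReal.ofReal (d * (1 / 2 : ℝ) ^ n) := by
          rw [Finset.sum_const, nsmul_eq_mul, Finset.card_product, Fintype.card_piFinset,
            ← ENNReal.ofReal_natCast, ← ENNReal.ofReal_mul (by positivity)]
          refine ENNReal.ofReal_le_ofReal ?_
          have hc : (((Finset.univ : Finset (Fin d)).card *
              ∏ _i : Fin d, (wordsN M n).card : ℕ) : ℝ) ≤ d * ((M : ℝ) ^ n) ^ d := by
            have : (Finset.univ : Finset (Fin d)).card *
              ∏ _i : Fin d, (wordsN M n).card ≤ d * (M ^ n) ^ d := by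
              simp only [Finset.prod_const, Finset.card_univ, Fintype.card_fin]
              gcongr
              exact card_wordsN_le M n
            exact_mod_cast this
          calc _ ≤ d * ((M : ℝ) ^ n) ^ d * (b ^ n)⁻¹ := by gcongr
            _ = d * (1 / 2 : ℝ) ^ n := by
              simp only [b]
              rw [mul_pow, ← pow_mul, ← pow_mul, mul_comm d n, one_div, inv_pow]
              field_simp
  have hsum : ∑' n, P (Bad n) ≠ ⊤ := by
    refine ne_top_of_le_ne_top ?_ (ENNReal.tsum_le_tsum hBad)
    have hs : Summable (fun n : ℕ => (d : ℝ) * (1 / 2 : ℝ) ^ n) :=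
      (summable_geometric_of_lt_one (by norm_num) (by norm_num)).mul_left _
    exact hs.tsum_ofReal_ne_top
  have hae := ae_eventually_notMem hsum
  refine ⟨d * (K * b), ?_⟩
  have hac : ProbabilityTheory.cond P {ω | ∀ i, limit1 M (ω i) ≠ ∅} ≪ P :=
    ProbabilityTheory.cond_absolutelyContinuous
  refine hac.ae_le ?_
  filter_upwards [hae] with ω hω
  obtain ⟨N, hN⟩ := Filter.eventually_atTop.1 hω
  refine ⟨N, fun n hn t w hw hint => ?_⟩
  have hn1 : (1 : ℝ) ≤ n := by
    have : 1 ≤ n := by omega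
    exact_mod_cast this
  have hgood := hN n hn.le
  -- geometry
  have hgeo : ∀ v : Fin d → List (Fin M), (∀ i, (v i).length = n) →
      (Hplane d a t ∩ prodCube d M v).Nonempty →
      t * (M : ℝ) ^ n - ∑ i, a i ≤ ∑ i, a i * (vl (v i) : ℝ) ∧
        ∑ i, a i * (vl (v i) : ℝ) ≤ t * (M : ℝ) ^ n := by
    rintro v hv ⟨y, hy1, hy2⟩
    have hMn : (0 : ℝ) < (M : ℝ) ^ n := by positivity
    have hy1' : ∑ i, a i * y i = t := hy1
    have hy2' : ∀ i, (vl (v i) : ℝ) ≤ y i * (M : ℝ) ^ n ∧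
        y i * (M : ℝ) ^ n ≤ vl (v i) + 1 := by
      intro i
      have h1 : y i ∈ interval1 M (v i) := hy2 i
      have h2 := base1_eq hM (v i)
      rw [interval1, Set.mem_Icc, hv i] at h1
      rw [hv i] at h2
      rw [← h2]
      refine ⟨mul_le_mul_of_nonneg_right h1.1 hMn.le, ?_⟩
      have h3 := mul_le_mul_of_nonneg_right h1.2 hMn.le
      rwa [add_mul, zpow_neg, zpow_natCast, inv_mul_cancel₀ hMn.ne'] at h3
    rw [← hy1', Finset.sum_mul]
    constructor
    · rw [← Finset.sum_sub_distrib]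
      refine Finset.sum_le_sum fun i _ => ?_
      nlinarith [mul_le_mul_of_nonneg_left (hy2' i).2 (ha i).le]
    · refine Finset.sum_le_sum fun i _ => ?_
      nlinarith [mul_le_mul_of_nonneg_left (hy2' i).1 (ha i).le]
  have hwg := hgeo w (fun i => (hw i).1) hint
  let F : Fin d → Finset (Fin d → List (Fin M)) := fun j =>
    (slab d M n a j w).filter (fun w' => ω ∈ ev (addw j w' fun _ => ∅))
  have hsub : {w' : Fin d → List (Fin M) |
      (∀ i, (w' i).length = n ∧ Retained1 M (ω i) (w' i)) ∧ w' ≠ w ∧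
      (Hplane d a t ∩ prodCube d M w').Nonempty ∧ ∃ i, w' i = w i} ⊆
      ((Finset.univ.biUnion F : Finset _) : Set (Fin d → List (Fin M))) := by
    rintro w' ⟨h1, _, h3, j, hj⟩
    rw [Finset.mem_coe, Finset.mem_biUnion]
    refine ⟨j, Finset.mem_univ _, ?_⟩
    rw [Finset.mem_filter, mem_slab]
    have h4 := hgeo w' (fun i => (h1 i).1) h3
    refine ⟨⟨fun i => (h1 i).1, hj, ?_⟩, mem_ev_addw j w' ω fun i => (h1 i).2⟩
    rw [abs_le]
    constructor <;> linarith [hwg.1, hwg.2, h4.1, h4.2]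
  have hFcard : ∀ j, ((F j).card : ℝ) ≤ K * (n : ℝ) ^ (d - 2) * b := by
    intro j
    by_contra hc
    push Not at hc
    apply hgood
    have hmem : (j, w) ∈ (Finset.univ : Finset (Fin d)) ×ˢ
        (Fintype.piFinset fun _ : Fin d => wordsN M n) := by
      simp only [Finset.mem_product, Finset.mem_univ, Fintype.mem_piFinset, true_and]
      exact fun i => mem_wordsN.2 (hw i).1
    refine Set.mem_biUnion (x := (j, w)) hmem ?_
    rw [Set.mem_ofPred_eq]
    have hX : XX j (slab d M n a j w) ω = ((F j).card : ℝ≥0∞) := by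
      simp only [XX, F, Set.indicator_apply, Pi.one_apply, Finset.sum_boole]
    rw [hX, ← ENNReal.ofReal_natCast]
    exact ENNReal.ofReal_le_ofReal hc.le
  have hfin := Set.ncard_le_ncard hsub (Finset.finite_toSet _)
  rw [Set.ncard_coe_finset] at hfin
  calc _ ≤ ((Finset.univ.biUnion F).card : ℝ) := by exact_mod_cast hfin
    _ ≤ ((∑ j, (F j).card : ℕ) : ℝ) := by exact_mod_cast Finset.card_biUnion_le
    _ = ∑ j, ((F j).card : ℝ) := by push_cast; rfl
    _ ≤ ∑ _j : Fin d, K * (n : ℝ) ^ (d - 2) * b := Finset.sum_le_sum fun j _ => hFcard j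
    _ = d * (K * b) * (n : ℝ) ^ (d - 2) := by
        rw [Finset.sum_const, Finset.card_univ, Fintype.card_fin, nsmul_eq_mul]; ring
    _ ≤ _ := by
        refine mul_le_mul_of_nonneg_left ?_ (by positivity)
        rw [← Real.rpow_natCast]
        refine Real.rpow_le_rpow_of_exponent_le hn1 ?_
        rw [Nat.cast_sub hd]
        have : (2 : ℝ) ≤ d := by exact_mod_cast hd
        push_cast
        nlinarith
end
end

section
/- Let d ≥ 1 and let E⁽¹⁾,…,E⁽ᵈ⁾ be independent one-dimensional fractal percolations with common scale M ≥ 2 and probabilities p₁,…,p_d ∈ (0,1] satisfying ∏_{i=1}^d p_i < M^{-(d−1)}. Fix a unit vector a = (a₁,…,a_d) with all a_i > 0 and fix ε > 0. Then there exists a constant C̃ such that, for almost every realization with all E⁽ⁱ⁾ nonempty, there is N such that for all n ≥ N and every t ∈ ℝ, the hyperplane H_t intersects at most C̃·n^{(1+ε)(d−1)} cubes K_n(x₁,…,x_d) of Ẽ_n. -/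
open MeasureTheory Set ENNReal ProbabilityTheory Real

noncomputable section

/-! ### Words as numbers -/

/-- The word of length `n` given by the base-`M` digits of `x`, most significant first. -/
def wd (M : ℕ) [NeZero M] : ℕ → ℕ → List (Fin M)
  | 0, _ => []
  | n + 1, x => wd M n (x / M) ++ [Fin.ofNat M x]

theorem wd_length (M : ℕ) [NeZero M] (n x : ℕ) : (wd M n x).length = n := by
  induction n generalizing x with
  | zero => rfl
  | succ n ih => simp [wd, ih]

theorem wd_ne_nil (M : ℕ) [NeZero M] (n x : ℕ) : wd M (n + 1) x ≠ [] := by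
  simp [wd]

theorem wd_inj (M : ℕ) [NeZero M] (n x y : ℕ) (hx : x < M ^ n) (hy : y < M ^ n)
    (h : wd M n x = wd M n y) : x = y := by
  induction n generalizing x y with
  | zero => simp at hx hy; omega
  | succ n ih =>
    simp only [wd] at h
    obtain ⟨h1, h2⟩ := List.append_inj' h rfl
    have hM : 0 < M := Nat.pos_of_ne_zero (NeZero.ne M)
    have e1 := ih (x / M) (y / M) (Nat.div_lt_of_lt_mul (by rwa [pow_succ'] at hx))
      (Nat.div_lt_of_lt_mul (by rwa [pow_succ'] at hy)) h1
    have e2 : x % M = y % M := by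
      have := congrArg (fun l : List (Fin M) => l.map Fin.val) h2
      simpa using this
    rw [← Nat.div_add_mod x M, ← Nat.div_add_mod y M, e1, e2]

theorem base1_append (M : ℕ) (w : List (Fin M)) (c : Fin M) :
    base1 M (w ++ [c]) = base1 M w + (c : ℝ) * (M : ℝ) ^ (-(w.length : ℤ) - 1) := by
  have key : ∀ w : List (Fin M), base1 M w =
      ∑ j ∈ Finset.range w.length, (((w[j]?).map (fun a => ((a : ℕ) : ℝ))).getD 0) *
        (M : ℝ) ^ (-(j : ℤ) - 1) := by
    intro w
    rw [Finset.sum_range]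
    unfold base1
    refine Finset.sum_congr rfl fun j _ => ?_
    simp
  rw [key, key]
  simp only [List.length_append, List.length_singleton, Finset.sum_range_succ]
  congr 1
  · refine Finset.sum_congr rfl fun j hj => ?_
    rw [List.getElem?_append_left (by simpa using hj)]
  · simp

theorem base1_wd (M : ℕ) [NeZero M] (n x : ℕ) (hx : x < M ^ n) :
    base1 M (wd M n x) * (M : ℝ) ^ n = x := by
  have hM : (M : ℝ) ≠ 0 := by exact_mod_cast NeZero.ne M
  induction n generalizing x with
  | zero =>
    simp at hx
    simp only [wd, base1, hx]
    simp only [pow_zero, mul_one, Nat.cast_zero]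
    exact Finset.sum_eq_zero fun j _ => j.elim0
  | succ n ih =>
    have h := ih (x / M) (Nat.div_lt_of_lt_mul (by rwa [pow_succ'] at hx))
    simp only [wd]
    rw [base1_append, wd_length, add_mul, pow_succ, ← mul_assoc, h]
    have e : (M : ℝ) ^ (-(n : ℤ) - 1) * ((M : ℝ) ^ n * M) = 1 := by
      rw [← pow_succ, ← zpow_natCast, ← zpow_add₀ hM]
      push_cast
      simp
    rw [mul_assoc, e, mul_one]
    have := Nat.div_add_mod x M
    simp only [Fin.val_ofNat]
    calc ((x / M : ℕ) : ℝ) * M + ((x % M : ℕ) : ℝ) = ((M * (x / M) + x % M : ℕ) : ℝ) := by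
          push_cast; ring
      _ = x := by rw [this]

theorem wd_surj (M : ℕ) [NeZero M] (n : ℕ) (w : List (Fin M)) (hw : w.length = n) :
    ∃ x < M ^ n, wd M n x = w := by
  induction n generalizing w with
  | zero => exact ⟨0, by simp, by simp [wd, List.length_eq_zero_iff.1 hw]⟩
  | succ n ih =>
    have hne : w ≠ [] := by rintro rfl; simp at hw
    obtain ⟨x, hx, h⟩ := ih w.dropLast (by simp [hw])
    have hM : 0 < M := Nat.pos_of_ne_zero (NeZero.ne M)
    have hl := (w.getLast hne).isLt
    refine ⟨M * x + w.getLast hne, ?_, ?_⟩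
    · rw [pow_succ']
      calc M * x + w.getLast hne < M * x + M := by omega
        _ = M * (x + 1) := by ring
        _ ≤ M * M ^ n := Nat.mul_le_mul_left _ hx
    · have e : (M * x + (w.getLast hne : ℕ)) / M = x := by
        rw [Nat.mul_add_div hM, Nat.div_eq_of_lt hl, add_zero]
      simp only [wd]
      rw [e, h]
      conv_rhs => rw [← List.dropLast_append_getLast hne]
      congr 2
      ext
      simp [Nat.mod_eq_of_lt hl]

theorem ret_succ (M : ℕ) [NeZero M] (ω : Perc1 M) (n x : ℕ) :
    Retained1 M ω (wd M (n + 1) x) ↔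
      Retained1 M ω (wd M n (x / M)) ∧ ω ⟨wd M (n + 1) x, wd_ne_nil M n x⟩ = true := by
  constructor
  · intro h
    refine ⟨fun u hu hp => h u hu ?_, h _ _ (List.prefix_refl _)⟩
    exact hp.trans (by simp [wd])
  · rintro ⟨h1, h2⟩ u hu hp
    rcases List.prefix_concat_iff.1 (show u <+: wd M n (x / M) ++ [Fin.ofNat M x] from hp) with h | h
    · subst h; exact h2
    · exact h1 u hu h

theorem ret_congr (M : ℕ) [NeZero M] (ω ω' : Perc1 M) (n x : ℕ)
    (h : ∀ q : Word1 M, q.1.length ≤ n → ω q = ω' q) :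
    Retained1 M ω (wd M n x) ↔ Retained1 M ω' (wd M n x) := by
  unfold Retained1
  refine forall_congr' fun u => forall_congr' fun hu => forall_congr' fun hp => ?_
  rw [h ⟨u, hu⟩ (by simpa [wd_length] using hp.length_le)]

theorem ret_zero (M : ℕ) [NeZero M] (ω : Perc1 M) (x : ℕ) : Retained1 M ω (wd M 0 x) := by
  intro u hu hp
  simp [wd] at hp
  exact absurd hp hu

theorem ret_div (M : ℕ) [NeZero M] (ω : Perc1 M) (n m x : ℕ)
    (h : Retained1 M ω (wd M (n + m) x)) : Retained1 M ω (wd M n (x / M ^ m)) := by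
  induction m generalizing x with
  | zero => simpa using h
  | succ m ih =>
    have := ih _ ((ret_succ M ω (n + m) x).1 h).1
    rwa [Nat.div_div_eq_div_mul, ← pow_succ'] at this

/-! ### Functions of finitely many labels -/

/-- `f` depends only on the labels in `S`. -/
def DepOn {d M : ℕ} {β : Type*} (S : Set (Fin d × Word1 M)) (f : (Fin d → Perc1 M) → β) : Prop :=
  ∀ ω ω', (∀ q ∈ S, ω q.1 q.2 = ω' q.1 q.2) → f ω = f ω'

theorem DepOn.mono {d M : ℕ} {β : Type*} {S S' : Set (Fin d × Word1 M)}
    {f : (Fin d → Perc1 M) → β} (h : DepOn S f) (hS : S ⊆ S') : DepOn S' f :=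
  fun ω ω' hq => h ω ω' fun q hqS => hq q (hS hqS)

open Classical in
/-- extension of a finite configuration by `false` -/
def extB {d M : ℕ} (S : Set (Fin d × Word1 M)) (r : S → Bool) : Fin d → Perc1 M :=
  fun i w => if h : (i, w) ∈ S then r ⟨(i, w), h⟩ else false

/-- restriction of a configuration -/
def resB {d M : ℕ} (S : Set (Fin d × Word1 M)) (ω : Fin d → Perc1 M) : S → Bool :=
  fun q => ω q.1.1 q.1.2

theorem DepOn.eq_ext {d M : ℕ} {β : Type*} {S : Set (Fin d × Word1 M)}
    {f : (Fin d → Perc1 M) → β} (h : DepOn S f) (ω : Fin d → Perc1 M) :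
    f ω = f (extB S (resB S ω)) := by
  apply h
  intro q hq
  simp [extB, resB, hq]

theorem measurable_resB {d M : ℕ} (S : Set (Fin d × Word1 M)) : Measurable (resB S) := by
  unfold resB
  fun_prop

theorem DepOn.measurable {d M : ℕ} {β : Type*} [MeasurableSpace β] {S : Set (Fin d × Word1 M)}
    (hS : S.Finite) {f : (Fin d → Perc1 M) → β} (h : DepOn S f) : Measurable f := by
  have : Finite S := hS
  have e : f = (fun r => f (extB S r)) ∘ resB S := funext h.eq_ext
  rw [e]
  exact (measurable_of_countable _).comp (measurable_resB S)

theorem lintegral_single {d M : ℕ} {p : Fin d → ℝ} {P : Measure (Fin d → Perc1 M)}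
    (hP : IsIndepBernoulli1 d M p P) {S : Set (Fin d × Word1 M)} (hS : S.Finite)
    (q : Fin d × Word1 M) (hq : q ∉ S) (f : (Fin d → Perc1 M) → ℝ≥0∞) (hf : DepOn S f) (b : Bool) :
    ∫⁻ ω, (if ω q.1 q.2 = b then f ω else 0) ∂P =
      (if b then ENNReal.ofReal (p q.1) else ENNReal.ofReal (1 - p q.1)) * ∫⁻ ω, f ω ∂P := by
  classical
  have : Fintype S := hS.fintype
  have hcyl : ∀ r : S → Bool, P {ω | resB S ω = r} =
      ∏ q ∈ S.toFinset, if extB S r q.1 q.2 then ENNReal.ofReal (p q.1)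
        else ENNReal.ofReal (1 - p q.1) := by
    intro r
    rw [← hP.2 S.toFinset (fun q => extB S r q.1 q.2)]
    congr 1
    ext ω
    simp only [mem_ofPred_eq, Set.mem_toFinset]
    constructor
    · rintro rfl q hq; simp [extB, resB, hq]
    · intro h; ext x; have := h x.1 x.2; simpa [extB, resB] using this
  have hcyl2 : ∀ r : S → Bool, P ({ω | resB S ω = r} ∩ {ω | ω q.1 q.2 = b}) =
      (if b then ENNReal.ofReal (p q.1) else ENNReal.ofReal (1 - p q.1)) *
        P {ω | resB S ω = r} := by
    intro r
    rw [hcyl]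
    have := hP.2 (insert q S.toFinset) (Function.update (fun q => extB S r q.1 q.2) q b)
    rw [Finset.prod_insert (by simpa using hq)] at this
    rw [Function.update_self] at this
    have e : ∏ x ∈ S.toFinset, (if Function.update (fun q => extB S r q.1 q.2) q b x = true
        then ENNReal.ofReal (p x.1) else ENNReal.ofReal (1 - p x.1)) =
        ∏ x ∈ S.toFinset, if extB S r x.1 x.2 = true then ENNReal.ofReal (p x.1)
          else ENNReal.ofReal (1 - p x.1) := by
      refine Finset.prod_congr rfl fun x hx => ?_
      rw [Function.update_of_ne]
      rintro rfl
      exact hq (by simpa using hx)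
    rw [e] at this
    rw [← this]
    congr 1
    ext ω
    simp only [mem_ofPred_eq, Set.mem_toFinset, Finset.mem_insert, mem_inter_iff]
    constructor
    · rintro ⟨rfl, h⟩ x (rfl | hx)
      · simpa using h
      · rw [Function.update_of_ne (by rintro rfl; exact hq hx)]
        simp [extB, resB, hx]
    · intro h
      refine ⟨?_, by simpa using h q (Or.inl rfl)⟩
      ext x
      have := h x.1 (Or.inr x.2)
      rw [Function.update_of_ne (by rintro h'; exact hq (h' ▸ x.2))] at this
      simpa [extB, resB] using this
  have m1 : ∀ r : S → Bool, MeasurableSet {ω : Fin d → Perc1 M | resB S ω = r} := fun r =>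
    (measurable_resB S) (measurableSet_singleton r)
  have m2 : MeasurableSet {ω : Fin d → Perc1 M | ω q.1 q.2 = b} := by
    have : Measurable fun ω : Fin d → Perc1 M => ω q.1 q.2 := by fun_prop
    exact this (measurableSet_singleton b)
  have e1 : ∀ ω, f ω = ∑ r : S → Bool, ({ω | resB S ω = r}).indicator
      (fun _ => f (extB S r)) ω := by
    intro ω
    simp only [indicator, mem_ofPred_eq, Finset.sum_ite_eq, Finset.mem_univ, if_true]
    exact hf.eq_ext ω
  have e2 : ∀ ω : Fin d → Perc1 M, (if ω q.1 q.2 = b then f ω else 0) = ∑ r : S → Bool,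
      ({ω | resB S ω = r} ∩ {ω | ω q.1 q.2 = b}).indicator (fun _ => f (extB S r)) ω := by
    intro ω
    by_cases h : ω q.1 q.2 = b
    · rw [if_pos h, e1 ω]
      refine Finset.sum_congr rfl fun r _ => ?_
      simp [indicator, h]
    · simp [indicator, h]
  rw [lintegral_congr e2, lintegral_congr e1, lintegral_finsetSum _ fun r _ =>
    measurable_const.indicator ((m1 r).inter m2), lintegral_finsetSum _ fun r _ =>
    measurable_const.indicator (m1 r), Finset.mul_sum]
  refine Finset.sum_congr rfl fun r _ => ?_
  rw [lintegral_indicator_const ((m1 r).inter m2), lintegral_indicator_const (m1 r), hcyl2]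
  ring

theorem mgf_single {d M : ℕ} {p : Fin d → ℝ} (hp0 : ∀ i, 0 < p i) (hp1 : ∀ i, p i ≤ 1)
    {P : Measure (Fin d → Perc1 M)}
    (hP : IsIndepBernoulli1 d M p P) {S : Set (Fin d × Word1 M)} (hS : S.Finite)
    (q : Fin d × Word1 M) (hq : q ∉ S) (F g : (Fin d → Perc1 M) → ℝ) (hF : DepOn S F)
    (hF0 : ∀ ω, 0 ≤ F ω) (hg : DepOn S g) :
    ∫⁻ ω, ENNReal.ofReal (F ω * Real.exp (if ω q.1 q.2 = true then g ω else 0)) ∂P ≤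
      ∫⁻ ω, ENNReal.ofReal (F ω * Real.exp (p q.1 * (Real.exp (g ω) - 1))) ∂P := by
  have d1 : DepOn S fun ω => ENNReal.ofReal (F ω * Real.exp (g ω)) := by
    intro ω ω' h; simp only; rw [hF ω ω' h, hg ω ω' h]
  have d2 : DepOn S fun ω => ENNReal.ofReal (F ω) := by
    intro ω ω' h; simp only; rw [hF ω ω' h]
  have e : ∀ ω : Fin d → Perc1 M,
      ENNReal.ofReal (F ω * Real.exp (if ω q.1 q.2 = true then g ω else 0)) =
      (if ω q.1 q.2 = true then ENNReal.ofReal (F ω * Real.exp (g ω)) else 0) +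
      (if ω q.1 q.2 = false then ENNReal.ofReal (F ω) else 0) := by
    intro ω
    cases h : ω q.1 q.2 <;> simp
  have mlab : Measurable fun ω : Fin d → Perc1 M => ω q.1 q.2 := by fun_prop
  have mite : Measurable fun ω : Fin d → Perc1 M =>
      if ω q.1 q.2 = false then ENNReal.ofReal (F ω) else 0 :=
    Measurable.ite (mlab (measurableSet_singleton false)) (d2.measurable hS) measurable_const
  rw [lintegral_congr e, lintegral_add_right _ mite, lintegral_single hP hS q hq _ d1,
    lintegral_single hP hS q hq _ d2]
  simp only [if_true, Bool.false_eq_true, if_false]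
  rw [← lintegral_const_mul _ (d1.measurable hS), ← lintegral_const_mul _ (d2.measurable hS),
    ← lintegral_add_right _ ((d2.measurable hS).const_mul _)]
  refine lintegral_mono fun ω => ?_
  have h0 := hp0 q.1
  have h1 := hp1 q.1
  rw [← ENNReal.ofReal_mul h0.le, ← ENNReal.ofReal_mul (by linarith),
    ← ENNReal.ofReal_add (mul_nonneg h0.le (mul_nonneg (hF0 ω) (Real.exp_pos _).le))
      (mul_nonneg (by linarith) (hF0 ω))]
  apply ENNReal.ofReal_le_ofReal
  have := Real.add_one_le_exp (p q.1 * (Real.exp (g ω) - 1))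
  calc _ = F ω * (p q.1 * (Real.exp (g ω) - 1) + 1) := by ring
    _ ≤ _ := mul_le_mul_of_nonneg_left this (hF0 ω)

theorem mgf_step {d M : ℕ} {p : Fin d → ℝ} (hp0 : ∀ i, 0 < p i) (hp1 : ∀ i, p i ≤ 1)
    {P : Measure (Fin d → Perc1 M)}
    (hP : IsIndepBernoulli1 d M p P) (i : Fin d) (e : ℕ → Fin d × Word1 M) (T : Finset ℕ)
    (he : Set.InjOn e T) (hi : ∀ x ∈ T, (e x).1 = i)
    {S : Set (Fin d × Word1 M)} (hS : S.Finite) (hTS : ∀ x ∈ T, e x ∉ S)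
    (F : (Fin d → Perc1 M) → ℝ) (g : ℕ → (Fin d → Perc1 M) → ℝ) (hF : DepOn S F)
    (hF0 : ∀ ω, 0 ≤ F ω) (hg : ∀ x, DepOn S (g x)) :
    ∫⁻ ω, ENNReal.ofReal (F ω * Real.exp
        (∑ x ∈ T, if ω (e x).1 (e x).2 = true then g x ω else 0)) ∂P ≤
      ∫⁻ ω, ENNReal.ofReal (F ω * Real.exp (∑ x ∈ T, p i * (Real.exp (g x ω) - 1))) ∂P := by
  induction T using Finset.induction_on generalizing F with
  | empty => simp
  | insert x T hx ih =>
    have heT : Set.InjOn e T := he.mono (by simp)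
    simp only [Finset.sum_insert hx, Real.exp_add]
    have hS' : (S ∪ e '' T).Finite := hS.union (T.finite_toSet.image e)
    have hx' : e x ∉ S ∪ e '' T := by
      rintro (h | ⟨y, hy, hxy⟩)
      · exact hTS x (by simp) h
      · exact hx (by rw [← he (by simp [Finset.mem_coe.1 hy]) (by simp) hxy]; exact hy)
    have A := mgf_single hp0 hp1 hP hS' (e x) hx'
      (fun ω => F ω * Real.exp (∑ x ∈ T, if ω (e x).1 (e x).2 = true then g x ω else 0)) (g x)
      (by
        intro ω ω' h
        simp only
        rw [hF ω ω' fun q hq => h q (Or.inl hq)]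
        congr 2
        refine Finset.sum_congr rfl fun y hy => ?_
        rw [h (e y) (Or.inr ⟨y, hy, rfl⟩), hg y ω ω' fun q hq => h q (Or.inl hq)])
      (fun ω => mul_nonneg (hF0 ω) (Real.exp_pos _).le) ((hg x).mono subset_union_left)
    have B := ih heT (fun y hy => hi y (by simp [hy])) (fun y hy => hTS y (by simp [hy]))
      (fun ω => F ω * Real.exp (p i * (Real.exp (g x ω) - 1)))
      (by intro ω ω' h; simp only; rw [hF ω ω' h, hg x ω ω' h])
      (fun ω => mul_nonneg (hF0 ω) (Real.exp_pos _).le)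
    rw [hi x (by simp)] at A
    refine le_trans (le_of_eq ?_) (A.trans (le_trans (le_of_eq ?_) (B.trans (le_of_eq ?_))))
    · refine lintegral_congr fun ω => ?_
      rw [hi x (by simp)]
      ring_nf
    · refine lintegral_congr fun ω => ?_
      ring_nf
    · refine lintegral_congr fun ω => ?_
      ring_nf

/-! ### The exponential supermartingale -/

/-- labels of words of length at most `l i` in coordinate `i` -/
def lev (d M : ℕ) (l : Fin d → ℕ) : Set (Fin d × Word1 M) := {q | q.2.1.length ≤ l q.1}

theorem lev_finite (d M : ℕ) (l : Fin d → ℕ) : (lev d M l).Finite := by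
  refine (Set.finite_univ.prod ((List.finite_length_le (Fin M) (∑ i, l i)).preimage
    (f := fun w : Word1 M => w.1) Subtype.val_injective.injOn)).subset ?_
  rintro ⟨i, w⟩ h
  refine ⟨trivial, ?_⟩
  have : w.1.length ≤ l i := h
  exact this.trans (Finset.single_le_sum (fun _ _ => Nat.zero_le _) (Finset.mem_univ i))

theorem lev_mono (d M : ℕ) {l l' : Fin d → ℕ} (h : ∀ i, l i ≤ l' i) : lev d M l ⊆ lev d M l' :=
  fun q hq => le_trans hq (h q.1)

/-- the boxes of level `l` containing the level-`N` cube `v` are retained (coordinates in `J`) -/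
def RR (d M : ℕ) [NeZero M] (J : Finset (Fin d)) (N : ℕ) (l : Fin d → ℕ)
    (ω : Fin d → Perc1 M) (v : Fin d → ℕ) : Prop :=
  ∀ j ∈ J, Retained1 M (ω j) (wd M (l j) (v j / M ^ (N - l j)))

open Classical in
/-- number of members of `A` whose level `l` boxes are retained -/
def ZZ (d M : ℕ) [NeZero M] (J : Finset (Fin d)) (N : ℕ) (A : Finset (Fin d → ℕ)) (l : Fin d → ℕ)
    (ω : Fin d → Perc1 M) : ℝ :=
  ((A.filter (RR d M J N l ω)).card : ℝ)

open Classical in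
/-- members of `A` lying in a slice -/
def CC (d M : ℕ) [NeZero M] (J : Finset (Fin d)) (N : ℕ) (A : Finset (Fin d → ℕ)) (l : Fin d → ℕ)
    (i : Fin d) (m y : ℕ) (ω : Fin d → Perc1 M) : ℝ :=
  ((A.filter (fun v => v i / M ^ m = y ∧ RR d M J N l ω v)).card : ℝ)

/-- conditional survival probability -/
def pw {d : ℕ} (p : Fin d → ℝ) (J : Finset (Fin d)) (N : ℕ) (l : Fin d → ℕ) : ℝ :=
  ∏ j ∈ J, p j ^ (N - l j)

theorem RR_dep (d M : ℕ) [NeZero M] (J : Finset (Fin d)) (N : ℕ) (l : Fin d → ℕ) :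
    DepOn (lev d M l) (RR d M J N l) := by
  intro ω ω' h
  ext v
  unfold RR
  refine forall_congr' fun j => forall_congr' fun _ => ?_
  exact ret_congr M _ _ _ _ fun q hq => h (j, q) hq

theorem ZZ_dep (d M : ℕ) [NeZero M] (J : Finset (Fin d)) (N : ℕ) (A : Finset (Fin d → ℕ))
    (l : Fin d → ℕ) : DepOn (lev d M l) (ZZ d M J N A l) := by
  intro ω ω' h
  unfold ZZ
  rw [RR_dep d M J N l ω ω' h]

theorem CC_dep (d M : ℕ) [NeZero M] (J : Finset (Fin d)) (N : ℕ) (A : Finset (Fin d → ℕ))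
    (l : Fin d → ℕ) (i : Fin d) (m y : ℕ) : DepOn (lev d M l) (CC d M J N A l i m y) := by
  intro ω ω' h
  unfold CC
  rw [RR_dep d M J N l ω ω' h]

theorem sum_CC (d M : ℕ) [NeZero M] (J : Finset (Fin d)) (N : ℕ) (A : Finset (Fin d → ℕ))
    (l : Fin d → ℕ) (i : Fin d) (hl : l i < N) (hA : ∀ v ∈ A, v i < M ^ N) (ω : Fin d → Perc1 M) :
    ∑ y ∈ Finset.range (M ^ (l i + 1)), CC d M J N A l i (N - (l i + 1)) y ω =
      ZZ d M J N A l ω := by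
  classical
  unfold CC ZZ
  rw [← Nat.cast_sum]
  congr 1
  rw [Finset.card_eq_sum_card_fiberwise (f := fun v => v i / M ^ (N - (l i + 1)))
    (t := Finset.range (M ^ (l i + 1)))]
  · refine Finset.sum_congr rfl fun y _ => ?_
    rw [Finset.filter_filter]
    congr 1
    ext v
    simp [and_comm]
  · intro v hv
    have := hA v (Finset.mem_filter.1 hv).1
    simp only [Finset.coe_range, Set.mem_Iio]
    refine Nat.div_lt_of_lt_mul ?_
    rw [← pow_add]
    rwa [show N - (l i + 1) + (l i + 1) = N by omega]

theorem RR_succ (d M : ℕ) [NeZero M] (J : Finset (Fin d)) (N : ℕ)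
    (l : Fin d → ℕ) (i : Fin d) (hi : i ∈ J) (hl : l i < N) (ω : Fin d → Perc1 M)
    (v : Fin d → ℕ) :
    RR d M J N (Function.update l i (l i + 1)) ω v ↔ RR d M J N l ω v ∧
      ω i ⟨wd M (l i + 1) (v i / M ^ (N - (l i + 1))), wd_ne_nil _ _ _⟩ = true := by
  have key : v i / M ^ (N - (l i + 1)) / M = v i / M ^ (N - l i) := by
    rw [Nat.div_div_eq_div_mul, ← pow_succ]
    congr 2
    omega
  constructor
  · intro h
    have hi' := h i hi
    rw [Function.update_self, ret_succ, key] at hi'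
    refine ⟨fun j hj => ?_, hi'.2⟩
    by_cases hji : j = i
    · subst hji; exact hi'.1
    · have := h j hj
      rwa [Function.update_of_ne hji] at this
  · rintro ⟨h, h2⟩ j hj
    by_cases hji : j = i
    · subst hji
      rw [Function.update_self, ret_succ, key]
      exact ⟨h j hj, h2⟩
    · rw [Function.update_of_ne hji]
      exact h j hj

theorem ZZ_succ (d M : ℕ) [NeZero M] (J : Finset (Fin d)) (N : ℕ) (A : Finset (Fin d → ℕ))
    (l : Fin d → ℕ) (i : Fin d) (hi : i ∈ J) (hl : l i < N) (hA : ∀ v ∈ A, v i < M ^ N)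
    (ω : Fin d → Perc1 M) :
    ZZ d M J N A (Function.update l i (l i + 1)) ω =
      ∑ y ∈ Finset.range (M ^ (l i + 1)),
        if ω i ⟨wd M (l i + 1) y, wd_ne_nil _ _ _⟩ = true then
          CC d M J N A l i (N - (l i + 1)) y ω else 0 := by
  classical
  unfold CC ZZ
  rw [Finset.card_eq_sum_card_fiberwise (f := fun v => v i / M ^ (N - (l i + 1)))
    (t := Finset.range (M ^ (l i + 1)))]
  · rw [Nat.cast_sum]
    refine Finset.sum_congr rfl fun y _ => ?_
    rw [Finset.filter_filter]
    split_ifs with h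
    · congr 2
      ext v
      simp only [RR_succ d M J N l i hi hl, Finset.mem_filter]
      constructor
      · rintro ⟨h0, ⟨h1, _⟩, h3⟩; exact ⟨h0, h3, h1⟩
      · rintro ⟨h0, h3, h1⟩; subst h3; exact ⟨h0, ⟨h1, h⟩, rfl⟩
    · rw [Nat.cast_eq_zero, Finset.card_eq_zero, Finset.filter_eq_empty_iff]
      rintro v _ ⟨h1, rfl⟩
      exact h ((RR_succ d M J N l i hi hl ω v).1 h1).2
  · intro v hv
    have := hA v (Finset.mem_filter.1 hv).1
    simp only [Finset.coe_range, Set.mem_Iio]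
    refine Nat.div_lt_of_lt_mul ?_
    rw [← pow_add]
    rwa [show N - (l i + 1) + (l i + 1) = N by omega]

theorem pw_succ {d : ℕ} (p : Fin d → ℝ) (J : Finset (Fin d)) (N : ℕ) (l : Fin d → ℕ) (i : Fin d)
    (hi : i ∈ J) (hl : l i < N) :
    pw p J N l = p i * pw p J N (Function.update l i (l i + 1)) := by
  unfold pw
  rw [← Finset.mul_prod_erase J _ hi, ← Finset.mul_prod_erase J _ hi, Function.update_self,
    ← mul_assoc, ← pow_succ']
  congr 1
  · congr 1; omega
  · refine Finset.prod_congr rfl fun j hj => ?_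
    rw [Function.update_of_ne (Finset.ne_of_mem_erase hj)]

theorem pw_nonneg {d : ℕ} {p : Fin d → ℝ} (hp0 : ∀ i, 0 < p i) (J : Finset (Fin d)) (N : ℕ)
    (l : Fin d → ℕ) : 0 ≤ pw p J N l :=
  Finset.prod_nonneg fun j _ => pow_nonneg (hp0 j).le _

theorem CC_nonneg (d M : ℕ) [NeZero M] (J : Finset (Fin d)) (N : ℕ) (A : Finset (Fin d → ℕ))
    (l : Fin d → ℕ) (i : Fin d) (m y : ℕ) (ω : Fin d → Perc1 M) :
    0 ≤ CC d M J N A l i m y ω := Nat.cast_nonneg _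

theorem coord_step {d M : ℕ} [NeZero M] {p : Fin d → ℝ} (hp0 : ∀ i, 0 < p i) (hp1 : ∀ i, p i ≤ 1)
    {P : Measure (Fin d → Perc1 M)} (hP : IsIndepBernoulli1 d M p P)
    (J : Finset (Fin d)) (N : ℕ) (A : Finset (Fin d → ℕ))
    (l : Fin d → ℕ) (i : Fin d) (hi : i ∈ J) (hl : l i < N) (hA : ∀ v ∈ A, v i < M ^ N)
    (F : (Fin d → Perc1 M) → ℝ) (hF : DepOn (lev d M l) F) (hF0 : ∀ ω, 0 ≤ F ω)
    (c δ : ℝ) (hc : 0 ≤ c) (hδ : δ ≤ 1)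
    (hb : ∀ ω, F ω ≠ 0 → ∀ y, c * pw p J N (Function.update l i (l i + 1)) *
      CC d M J N A l i (N - (l i + 1)) y ω ≤ δ) :
    ∫⁻ ω, ENNReal.ofReal (F ω * Real.exp (c * pw p J N (Function.update l i (l i + 1)) *
        ZZ d M J N A (Function.update l i (l i + 1)) ω)) ∂P ≤
    ∫⁻ ω, ENNReal.ofReal (F ω * Real.exp (c * (1 + δ) * pw p J N l * ZZ d M J N A l ω)) ∂P := by
  set b : ℝ := c * pw p J N (Function.update l i (l i + 1)) with hbdef
  have hb0 : 0 ≤ b := mul_nonneg hc (pw_nonneg hp0 _ _ _)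
  have st := mgf_step hp0 hp1 hP i (fun y => (i, ⟨wd M (l i + 1) y, wd_ne_nil M (l i) y⟩))
    (Finset.range (M ^ (l i + 1)))
    (by
      intro x hx y hy hxy
      simp only [Prod.mk.injEq, Subtype.mk.injEq, true_and] at hxy
      exact wd_inj M _ x y (by simpa using hx) (by simpa using hy) hxy)
    (fun _ _ => rfl) (lev_finite d M l)
    (by
      intro x _ h
      have : (wd M (l i + 1) x).length ≤ l i := h
      rw [wd_length] at this
      omega)
    F (fun y ω => b * CC d M J N A l i (N - (l i + 1)) y ω) hF hF0
    (by
      intro y ω ω' h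
      simp only
      rw [CC_dep d M J N A l i _ y ω ω' h])
  refine le_trans (le_of_eq ?_) (st.trans ?_)
  · refine lintegral_congr fun ω => ?_
    rw [ZZ_succ d M J N A l i hi hl hA, Finset.mul_sum]
    congr 3
    refine Finset.sum_congr rfl fun y _ => ?_
    split_ifs <;> simp
  · refine lintegral_mono fun ω => ENNReal.ofReal_le_ofReal ?_
    by_cases hz : F ω = 0
    · simp [hz]
    refine mul_le_mul_of_nonneg_left (Real.exp_le_exp.2 ?_) (hF0 ω)
    have hpi := hp0 i
    calc ∑ y ∈ Finset.range (M ^ (l i + 1)),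
          p i * (Real.exp (b * CC d M J N A l i (N - (l i + 1)) y ω) - 1)
        ≤ ∑ y ∈ Finset.range (M ^ (l i + 1)),
          (p i * b * (1 + δ)) * CC d M J N A l i (N - (l i + 1)) y ω := by
          refine Finset.sum_le_sum fun y _ => ?_
          have h1 := hb ω hz y
          have h0 : 0 ≤ b * CC d M J N A l i (N - (l i + 1)) y ω :=
            mul_nonneg hb0 (CC_nonneg _ _ _ _ _ _ _ _ _ _)
          set z := b * CC d M J N A l i (N - (l i + 1)) y ω with hzdef
          have h2 := Real.abs_exp_sub_one_sub_id_le (x := z) (by rw [abs_of_nonneg h0]; linarith)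
          have h3 := (abs_le.1 h2).2
          have h4 : Real.exp z - 1 ≤ z * (1 + δ) := by nlinarith
          calc p i * (Real.exp z - 1) ≤ p i * (z * (1 + δ)) :=
                mul_le_mul_of_nonneg_left h4 hpi.le
            _ = _ := by rw [hzdef]; ring
      _ = _ := by
          rw [← Finset.mul_sum, sum_CC d M J N A l i hl hA, pw_succ p J N l i hi hl, hbdef]
          ring

/-- levels: `n + 1` on `I`, `n` elsewhere -/
def lI {d : ℕ} (n : ℕ) (I : Finset (Fin d)) : Fin d → ℕ := fun j => if j ∈ I then n + 1 else n

theorem lI_insert {d : ℕ} (n : ℕ) (I : Finset (Fin d)) (i : Fin d) (hi : i ∉ I) :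
    lI n (insert i I) = Function.update (lI n I) i (lI n I i + 1) := by
  ext j
  by_cases h : j = i
  · subst h; simp [lI, hi]
  · rw [Function.update_of_ne h]; simp [lI, h]

theorem RR_lI (d M : ℕ) [NeZero M] (J : Finset (Fin d)) (N n : ℕ) (hn : n < N)
    (I : Finset (Fin d)) (ω : Fin d → Perc1 M) (v : Fin d → ℕ)
    (h : RR d M J N (lI n I) ω v) : RR d M J N (fun _ => n) ω v := by
  intro j hj
  have := h j hj
  by_cases hjI : j ∈ I
  · simp only [lI, hjI, if_true] at this
    have := ret_div M (ω j) n 1 _ this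
    rwa [Nat.div_div_eq_div_mul, ← pow_add, show N - (n + 1) + 1 = N - n by omega] at this
  · simpa [lI, hjI] using this

theorem level_step {d M : ℕ} [NeZero M] {p : Fin d → ℝ} (hp0 : ∀ i, 0 < p i) (hp1 : ∀ i, p i ≤ 1)
    {P : Measure (Fin d → Perc1 M)} (hP : IsIndepBernoulli1 d M p P)
    (J : Finset (Fin d)) (N : ℕ) (A : Finset (Fin d → ℕ))
    (n : ℕ) (hn : n < N) (hA : ∀ v ∈ A, ∀ i ∈ J, v i < M ^ N)
    (F : (Fin d → Perc1 M) → ℝ) (hF : DepOn (lev d M fun _ => n) F) (hF0 : ∀ ω, 0 ≤ F ω)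
    (c δ : ℝ) (hc : 0 ≤ c) (hδ0 : 0 ≤ δ) (hδ : δ ≤ 1)
    (hb : ∀ ω, F ω ≠ 0 → ∀ i ∈ J, ∀ y, c * (1 + δ) ^ J.card * (∏ j ∈ J, p j ^ (N - (n + 1))) *
      CC d M J N A (fun _ => n) i (N - (n + 1)) y ω ≤ δ) :
    ∫⁻ ω, ENNReal.ofReal (F ω * Real.exp (c * pw p J N (fun _ => n + 1) *
        ZZ d M J N A (fun _ => n + 1) ω)) ∂P ≤
    ∫⁻ ω, ENNReal.ofReal (F ω * Real.exp (c * (1 + δ) ^ J.card * pw p J N (fun _ => n) *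
        ZZ d M J N A (fun _ => n) ω)) ∂P := by
  classical
  have claim : ∀ I : Finset (Fin d), I ⊆ J → ∀ c : ℝ, 0 ≤ c →
      (∀ ω, F ω ≠ 0 → ∀ i ∈ J, ∀ y, c * (1 + δ) ^ I.card * (∏ j ∈ J, p j ^ (N - (n + 1))) *
        CC d M J N A (fun _ => n) i (N - (n + 1)) y ω ≤ δ) →
      ∫⁻ ω, ENNReal.ofReal (F ω * Real.exp (c * pw p J N (lI n I) *
        ZZ d M J N A (lI n I) ω)) ∂P ≤
      ∫⁻ ω, ENNReal.ofReal (F ω * Real.exp (c * (1 + δ) ^ I.card * pw p J N (fun _ => n) *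
        ZZ d M J N A (fun _ => n) ω)) ∂P := by
    intro I
    induction I using Finset.induction_on with
    | empty =>
      intro _ c _ _
      have : (lI n ∅ : Fin d → ℕ) = fun _ => n := by ext; simp [lI]
      rw [this]
      simp
    | insert i I hi ih =>
      intro hIJ c hc hb
      have hiJ : i ∈ J := hIJ (by simp)
      have hli : lI n I i = n := by simp [lI, hi]
      have hcard : (insert i I).card = I.card + 1 := Finset.card_insert_of_notMem hi
      have s1 := coord_step hp0 hp1 hP J N A (lI n I) i hiJ (by omega) (fun v hv => hA v hv i hiJ)
        F (hF.mono (lev_mono d M fun j => by unfold lI; split_ifs <;> omega)) hF0 c δ hc hδ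
        (by
          intro ω hω y
          refine le_trans ?_ (hb ω hω i hiJ y)
          have e1 : pw p J N (Function.update (lI n I) i (lI n I i + 1)) ≤
              ∏ j ∈ J, p j ^ (N - (n + 1)) := by
            rw [← lI_insert n I i hi]
            refine Finset.prod_le_prod (fun j _ => pow_nonneg (hp0 j).le _) fun j _ => ?_
            refine pow_le_pow_of_le_one (hp0 j).le (hp1 j) ?_
            unfold lI; split_ifs <;> omega
          have e2 : CC d M J N A (lI n I) i (N - (lI n I i + 1)) y ω ≤
              CC d M J N A (fun _ => n) i (N - (n + 1)) y ω := by
            rw [hli]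
            unfold CC
            refine Nat.cast_le.2 (Finset.card_le_card ?_)
            intro v hv
            rw [Finset.mem_filter] at hv ⊢
            exact ⟨hv.1, hv.2.1, RR_lI d M J N n hn I ω v hv.2.2⟩
          have e3 : c ≤ c * (1 + δ) ^ (insert i I).card :=
            le_mul_of_one_le_right hc (one_le_pow₀ (by linarith))
          refine mul_le_mul (mul_le_mul e3 e1 (pw_nonneg hp0 _ _ _) (hc.trans e3)) e2
            (CC_nonneg _ _ _ _ _ _ _ _ _ _) ?_
          exact mul_nonneg (hc.trans e3) (Finset.prod_nonneg fun j _ => pow_nonneg (hp0 j).le _))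
      rw [lI_insert n I i hi]
      refine s1.trans ?_
      have s2 := ih (fun j hj => hIJ (by simp [hj])) (c * (1 + δ)) (mul_nonneg hc (by linarith))
        (by
          intro ω hω j hj y
          have := hb ω hω j hj y
          rw [hcard] at this
          refine le_trans (le_of_eq ?_) this
          ring)
      refine s2.trans (le_of_eq ?_)
      refine lintegral_congr fun ω => ?_
      rw [hcard]
      ring_nf
  have h := claim J (le_refl _) c hc hb
  refine le_trans (le_of_eq ?_) h
  refine lintegral_congr fun ω => ?_
  have e1 : pw p J N (lI n J) = pw p J N (fun _ => n + 1) :=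
    Finset.prod_congr rfl fun j hj => by simp [lI, hj]
  have e2 : ZZ d M J N A (lI n J) ω = ZZ d M J N A (fun _ => n + 1) ω := by
    unfold ZZ
    congr 3
    ext v
    unfold RR
    refine forall_congr' fun j => forall_congr' fun hj => ?_
    simp [lI, hj]
  rw [e1, e2]

/-- Chain of all levels. -/
theorem chain {d M : ℕ} [NeZero M] {p : Fin d → ℝ} (hp0 : ∀ i, 0 < p i) (hp1 : ∀ i, p i ≤ 1)
    {P : Measure (Fin d → Perc1 M)} (hP : IsIndepBernoulli1 d M p P)
    (J : Finset (Fin d)) (N : ℕ) (A : Finset (Fin d → ℕ))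
    (hA : ∀ v ∈ A, ∀ i ∈ J, v i < M ^ N)
    (G : ℕ → Set (Fin d → Perc1 M)) (hG : ∀ n, DepOn (lev d M fun _ => n) (fun ω => ω ∈ G n))
    (hGa : Antitone G) (k : ℕ) (q : ℝ) (hq : q = (M : ℝ) ^ k * ∏ j ∈ J, p j) (hq1 : q < 1)
    (D C1 c : ℝ) (hD : 1 ≤ D) (hC1 : 1 ≤ C1) (hc : 0 < c) (hc1 : c ≤ 1)
    (hcq : (J.card : ℝ) * c ≤ (1 - q) / 2)
    (hb : ∀ n < N, ∀ ω ∈ G n, ∀ i ∈ J, ∀ y,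
      CC d M J N A (fun _ => n) i (N - (n + 1)) y ω ≤ D * C1 * ((M : ℝ) ^ (N - n)) ^ k)
    (hAc : (A.card : ℝ) ≤ C1 * ((M : ℝ) ^ N) ^ k) (R : ℝ) :
    P {ω | ω ∈ G N ∧ R ≤ ZZ d M J N A (fun _ => N) ω} ≤
      ENNReal.ofReal (Real.exp (1 - c / (2 * D * C1 * (M : ℝ) ^ k) * R)) := by
  classical
  have hM1 : (1 : ℝ) ≤ M := by exact_mod_cast Nat.one_le_iff_ne_zero.2 (NeZero.ne M)
  have hMk : (1 : ℝ) ≤ (M : ℝ) ^ k := one_le_pow₀ hM1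
  have hq0 : 0 < q := by
    rw [hq]; exact mul_pos (by linarith) (Finset.prod_pos fun j _ => hp0 j)
  set lam : ℝ := c / (2 * D * C1 * (M : ℝ) ^ k) with hlam
  have hDCM : 0 < 2 * D * C1 * (M : ℝ) ^ k := by positivity
  have hlam0 : 0 < lam := div_pos hc hDCM
  have hlamD : 2 * lam * D * C1 * (M : ℝ) ^ k = c := by
    rw [hlam]; field_simp
  -- geometric sums
  have hgeo : ∀ m : ℕ, ∑ j ∈ Finset.range m, q ^ j ≤ 1 / (1 - q) := by
    intro m
    rw [geom_sum_eq hq1.ne, ← neg_div_neg_eq]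
    refine div_le_div₀ (by norm_num) ?_ (by linarith) (by linarith)
    have : 0 ≤ q ^ m := by positivity
    linarith
  have hexp : ∀ m : ℕ, Real.exp (J.card * c * ∑ j ∈ Finset.range m, q ^ j) ≤ 2 := by
    intro m
    have h1 : J.card * c * ∑ j ∈ Finset.range m, q ^ j ≤ 1 / 2 := by
      calc J.card * c * ∑ j ∈ Finset.range m, q ^ j ≤ (1 - q) / 2 * (1 / (1 - q)) :=
            mul_le_mul hcq (hgeo m) (Finset.sum_nonneg fun _ _ => by positivity) (by linarith)
        _ = 1 / 2 := by field_simp [show (1 - q) ≠ 0 by linarith]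
    calc Real.exp _ ≤ Real.exp (1 / 2) := Real.exp_le_exp.2 h1
      _ ≤ 2 := by
        have := Real.exp_bound_div_one_sub_of_interval (x := 1 / 2) (by norm_num) (by norm_num)
        norm_num at this ⊢
        exact this
  have dF : ∀ n, DepOn (lev d M fun _ => n) (fun ω => if ω ∈ G n then (1 : ℝ) else 0) := by
    intro n ω ω' h
    have := hG n ω ω' h
    simp only at this ⊢
    simp only [this]
  have main : ∀ m ≤ N, ∫⁻ ω, ENNReal.ofReal ((if ω ∈ G N then 1 else 0) *
        Real.exp (lam * ZZ d M J N A (fun _ => N) ω)) ∂P ≤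
      ∫⁻ ω, ENNReal.ofReal ((if ω ∈ G (N - m) then 1 else 0) *
        Real.exp (lam * Real.exp (J.card * c * ∑ j ∈ Finset.range m, q ^ j) *
          pw p J N (fun _ => N - m) * ZZ d M J N A (fun _ => N - m) ω)) ∂P := by
    intro m
    induction m with
    | zero => intro _; simp [pw]
    | succ m ih =>
      intro hm
      refine (ih (by omega)).trans ?_
      obtain ⟨n, hn⟩ : ∃ n, n = N - (m + 1) := ⟨_, rfl⟩
      have hnm : N - m = n + 1 := by omega
      have hnN : n < N := by omega
      have hm' : N - (n + 1) = m := by omega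
      rw [hnm, ← hn]
      set lam' := lam * Real.exp (J.card * c * ∑ j ∈ Finset.range m, q ^ j) with hlam'
      have hlam'0 : 0 ≤ lam' := mul_nonneg hlam0.le (Real.exp_pos _).le
      set δ := c * q ^ m with hδ
      have hδ0 : 0 ≤ δ := by positivity
      have hδ1 : δ ≤ 1 := mul_le_one₀ hc1 (by positivity) (pow_le_one₀ hq0.le hq1.le)
      have hstep : lam' * (1 + δ) ^ J.card ≤
          lam * Real.exp (J.card * c * ∑ j ∈ Finset.range (m + 1), q ^ j) := by
        rw [Finset.sum_range_succ, mul_add, Real.exp_add, hlam', mul_assoc, mul_assoc]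
        refine mul_le_mul_of_nonneg_left (mul_le_mul_of_nonneg_left ?_ (Real.exp_pos _).le) hlam0.le
        calc (1 + δ) ^ J.card ≤ (Real.exp δ) ^ J.card :=
              pow_le_pow_left₀ (by linarith) (by linarith [Real.add_one_le_exp δ]) _
          _ = Real.exp (J.card * c * q ^ m) := by
              rw [← Real.exp_nat_mul, hδ]; ring_nf
      have hprodq : (∏ j ∈ J, p j ^ m) * ((M : ℝ) ^ (m + 1)) ^ k = q ^ m * (M : ℝ) ^ k := by
        rw [hq, mul_pow, Finset.prod_pow]
        ring
      have st := level_step hp0 hp1 hP J N A n hnN hA (fun ω => if ω ∈ G n then (1 : ℝ) else 0)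
        (dF n) (fun ω => by split_ifs <;> norm_num) lam' δ hlam'0 hδ0 hδ1
        (by
          intro ω hω i hi y
          have hωG : ω ∈ G n := by by_contra h; simp [h] at hω
          have h1 := hb n hnN ω hωG i hi y
          rw [show N - n = m + 1 by omega, hm'] at h1
          rw [hm']
          have hP0 : 0 ≤ ∏ j ∈ J, p j ^ m :=
            Finset.prod_nonneg fun j _ => pow_nonneg (hp0 j).le _
          calc lam' * (1 + δ) ^ J.card * (∏ j ∈ J, p j ^ m) * CC d M J N A (fun _ => n) i m y ω
              ≤ (lam * 2) * (∏ j ∈ J, p j ^ m) * (D * C1 * ((M : ℝ) ^ (m + 1)) ^ k) := by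
                refine mul_le_mul (mul_le_mul_of_nonneg_right (hstep.trans
                  (mul_le_mul_of_nonneg_left (hexp _) hlam0.le)) hP0) h1
                  (CC_nonneg _ _ _ _ _ _ _ _ _ _) (by positivity)
            _ = (lam * 2) * D * C1 * ((∏ j ∈ J, p j ^ m) * ((M : ℝ) ^ (m + 1)) ^ k) := by ring
            _ = (2 * lam * D * C1 * (M : ℝ) ^ k) * q ^ m := by rw [hprodq]; ring
            _ = δ := by rw [hlamD])
      refine le_trans (lintegral_mono fun ω => ENNReal.ofReal_le_ofReal ?_) (st.trans
        (lintegral_mono fun ω => ENNReal.ofReal_le_ofReal ?_))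
      · refine mul_le_mul_of_nonneg_right ?_ (Real.exp_pos _).le
        by_cases h : ω ∈ G (n + 1)
        · have : ω ∈ G n := hGa (Nat.le_succ n) h
          simp [h, this]
        · simp only [h, if_false]; split_ifs <;> norm_num
      · refine mul_le_mul_of_nonneg_left (Real.exp_le_exp.2 ?_) (by split_ifs <;> norm_num)
        refine mul_le_mul_of_nonneg_right (mul_le_mul_of_nonneg_right hstep (pw_nonneg hp0 _ _ _))
          (Nat.cast_nonneg _)
  have h := main N le_rfl
  rw [Nat.sub_self] at h
  have h2 : ∫⁻ ω, ENNReal.ofReal ((if ω ∈ G N then 1 else 0) *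
        Real.exp (lam * ZZ d M J N A (fun _ => N) ω)) ∂P ≤ ENNReal.ofReal (Real.exp 1) := by
    refine h.trans ?_
    have := hP.1
    calc _ ≤ ∫⁻ ω, ENNReal.ofReal (Real.exp 1) ∂P := by
          refine lintegral_mono fun ω => ENNReal.ofReal_le_ofReal ?_
          refine le_trans (mul_le_of_le_one_left (Real.exp_pos _).le
            (by split_ifs <;> norm_num)) (Real.exp_le_exp.2 ?_)
          have z1 : ZZ d M J N A (fun _ => 0) ω ≤ C1 * ((M : ℝ) ^ N) ^ k := by
            refine le_trans ?_ hAc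
            exact Nat.cast_le.2 (Finset.card_filter_le _ _)
          have z2 : pw p J N (fun _ => 0) * ((M : ℝ) ^ N) ^ k = q ^ N := by
            unfold pw
            simp only [Nat.sub_zero]
            rw [hq, mul_pow, Finset.prod_pow]
            ring
          calc _ ≤ (lam * 2) * pw p J N (fun _ => 0) * (C1 * ((M : ℝ) ^ N) ^ k) := by
                refine mul_le_mul (mul_le_mul_of_nonneg_right
                  (mul_le_mul_of_nonneg_left (hexp _) hlam0.le) (pw_nonneg hp0 _ _ _)) z1
                  (Nat.cast_nonneg _) (mul_nonneg (by positivity) (pw_nonneg hp0 _ _ _))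
            _ = 2 * lam * C1 * (pw p J N (fun _ => 0) * ((M : ℝ) ^ N) ^ k) := by ring
            _ = 2 * lam * C1 * q ^ N := by rw [z2]
            _ ≤ 2 * lam * C1 * 1 :=
                mul_le_mul_of_nonneg_left (pow_le_one₀ hq0.le hq1.le) (by positivity)
            _ ≤ 2 * lam * C1 * (D * (M : ℝ) ^ k) :=
                mul_le_mul_of_nonneg_left (one_le_mul_of_one_le_of_one_le hD hMk) (by positivity)
            _ = c := by rw [← hlamD]; ring
            _ ≤ 1 := hc1
      _ = ENNReal.ofReal (Real.exp 1) := by simp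
  have dE : DepOn (lev d M fun _ => N) (fun ω => ENNReal.ofReal ((if ω ∈ G N then 1 else 0) *
        Real.exp (lam * ZZ d M J N A (fun _ => N) ω))) := by
    intro ω ω' h
    have h1 := dF N ω ω' h
    simp only at h1 ⊢
    rw [h1, ZZ_dep d M J N A _ ω ω' h]
  have mk := mul_meas_ge_le_lintegral (μ := P) (dE.measurable (lev_finite d M _))
    (ENNReal.ofReal (Real.exp (lam * R)))
  have hsub : {ω | ω ∈ G N ∧ R ≤ ZZ d M J N A (fun _ => N) ω} ⊆
      {ω | ENNReal.ofReal (Real.exp (lam * R)) ≤ ENNReal.ofReal ((if ω ∈ G N then 1 else 0) *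
        Real.exp (lam * ZZ d M J N A (fun _ => N) ω))} := by
    rintro ω ⟨h1, h2⟩
    simp only [mem_ofPred_eq, h1, if_true, one_mul]
    exact ENNReal.ofReal_le_ofReal (Real.exp_le_exp.2 (mul_le_mul_of_nonneg_left h2 hlam0.le))
  have mk2 := (mk.trans h2)
  rw [sub_eq_add_neg, Real.exp_add, ENNReal.ofReal_mul (Real.exp_pos _).le, Real.exp_neg,
    ENNReal.ofReal_inv_of_pos (Real.exp_pos _), ← div_eq_mul_inv]
  refine (measure_mono hsub).trans ?_
  rw [ENNReal.le_div_iff_mul_le (Or.inl (by simp [Real.exp_pos])) (Or.inl (by simp)), mul_comm]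
  exact mk2

/-! ### Geometry -/

open Classical in
/-- all level `n` cubes (coordinates outside `J` are `0`) in a window of length `2 ∑ a` -/
def AA (d M : ℕ) (a : Fin d → ℝ) (J : Finset (Fin d)) (n : ℕ) (s : ℝ) : Finset (Fin d → ℕ) :=
  (Fintype.piFinset fun i => if i ∈ J then Finset.range (M ^ n) else {0}).filter
    fun x => s ≤ ∑ i, a i * (x i : ℝ) ∧ ∑ i, a i * (x i : ℝ) ≤ s + 2 * ∑ i, a i

open Classical in
/-- number of retained level `n` cubes in a window -/
def cnt (d M : ℕ) [NeZero M] (a : Fin d → ℝ) (J : Finset (Fin d)) (n : ℕ) (s : ℝ)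
    (ω : Fin d → Perc1 M) : ℕ :=
  ((AA d M a J n s).filter fun x => ∀ j ∈ J, Retained1 M (ω j) (wd M n (x j))).card

theorem cnt_eq_ZZ (d M : ℕ) [NeZero M] (a : Fin d → ℝ) (J : Finset (Fin d)) (n : ℕ) (s : ℝ)
    (ω : Fin d → Perc1 M) :
    (cnt d M a J n s ω : ℝ) = ZZ d M J n (AA d M a J n s) (fun _ => n) ω := by
  classical
  unfold cnt ZZ
  congr 2
  ext v
  simp [RR]

theorem card_interval (Y : Finset ℕ) (C : ℕ) (b ρ : ℝ) (hb : 0 < b) (hC : ρ / b + 1 ≤ C)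
    (h : ∀ y ∈ Y, ∀ z ∈ Y, b * ((y : ℝ) - z) ≤ ρ) : Y.card ≤ C := by
  rcases Y.eq_empty_or_nonempty with rfl | hY
  · simp
  have h1 : Y ⊆ Finset.Icc (Y.min' hY) (Y.max' hY) := fun y hy =>
    Finset.mem_Icc.2 ⟨Y.min'_le y hy, Y.le_max' y hy⟩
  have h2 := Finset.card_le_card h1
  rw [Nat.card_Icc] at h2
  have h3 := h _ (Y.max'_mem hY) _ (Y.min'_mem hY)
  have h4 : (Y.max' hY : ℝ) - Y.min' hY ≤ ρ / b := by
    rw [le_div_iff₀ hb]; linarith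
  have h5 : ((Y.max' hY : ℕ) : ℝ) + 1 ≤ ((C + Y.min' hY : ℕ) : ℝ) := by push_cast; linarith
  have h6 : Y.max' hY + 1 ≤ C + Y.min' hY := by exact_mod_cast h5
  omega

theorem card_window {d : ℕ} (a : Fin d → ℝ) (ha : ∀ i, 0 < a i) (i : Fin d) (C : ℕ)
    (hC : (2 * ∑ j, a j) / a i + 1 ≤ C) (X : Finset (Fin d → ℕ)) (T : Fin d → Finset ℕ) (s : ℝ)
    (hX : ∀ v ∈ X, s ≤ ∑ j, a j * (v j : ℝ) ∧ ∑ j, a j * (v j : ℝ) ≤ s + 2 * ∑ j, a j)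
    (hT : ∀ v ∈ X, ∀ j, j ≠ i → v j ∈ T j) :
    X.card ≤ C * ∏ j ∈ Finset.univ.erase i, (T j).card := by
  classical
  have h1 := Finset.card_le_mul_card_image (f := fun v : Fin d → ℕ => Function.update v i 0) X C
    (by
      intro w _
      have hinj : Set.InjOn (fun v : Fin d → ℕ => v i)
          (X.filter fun v => Function.update v i 0 = w) := by
        intro v hv v' hv' hvv
        simp only [Finset.coe_filter, mem_ofPred_eq] at hv hv'
        ext j
        by_cases hj : j = i
        · subst hj; exact hvv
        · have := congrFun (hv.2.trans hv'.2.symm) j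
          simpa [hj] using this
      rw [← Finset.card_image_of_injOn hinj]
      refine card_interval _ C (a i) _ (ha i) hC ?_
      intro y hy z hz
      rw [Finset.mem_image] at hy hz
      obtain ⟨v, hv, rfl⟩ := hy
      obtain ⟨v', hv', rfl⟩ := hz
      rw [Finset.mem_filter] at hv hv'
      have e : ∀ v : Fin d → ℕ, ∑ j, a j * (v j : ℝ) =
          a i * v i + ∑ j, a j * ((Function.update v i 0) j : ℝ) := by
        intro v
        rw [← Finset.add_sum_erase _ _ (Finset.mem_univ i),
          ← Finset.add_sum_erase (a := i) _ (fun j => a j * ((Function.update v i 0) j : ℝ))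
            (Finset.mem_univ i)]
        simp only [Function.update_self, Nat.cast_zero, mul_zero, zero_add]
        congr 1
        refine Finset.sum_congr rfl fun j hj => ?_
        rw [Function.update_of_ne (Finset.ne_of_mem_erase hj)]
      have h1 := hX v hv.1
      have h2 := hX v' hv'.1
      rw [e v, hv.2] at h1
      rw [e v', hv'.2] at h2
      linarith [h1.2, h2.1])
  refine h1.trans (Nat.mul_le_mul_left _ ?_)
  have h2 : X.image (fun v : Fin d → ℕ => Function.update v i 0) ⊆
      Fintype.piFinset (Function.update T i {0}) := by
    intro w hw
    rw [Finset.mem_image] at hw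
    obtain ⟨v, hv, rfl⟩ := hw
    rw [Fintype.mem_piFinset]
    intro j
    by_cases hj : j = i
    · subst hj; simp
    · simpa [hj] using hT v hv j hj
  refine (Finset.card_le_card h2).trans (le_of_eq ?_)
  rw [Fintype.card_piFinset, ← Finset.mul_prod_erase _ _ (Finset.mem_univ i)]
  simp only [Function.update_self, Finset.card_singleton, one_mul]
  refine Finset.prod_congr rfl fun j hj => ?_
  rw [Function.update_of_ne (Finset.ne_of_mem_erase hj)]

theorem prod_ite_erase {d : ℕ} (J : Finset (Fin d)) (i : Fin d) (K : ℕ) :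
    ∏ j ∈ Finset.univ.erase i, (if j ∈ J then K else 1) = K ^ (J.erase i).card := by
  classical
  rw [Finset.prod_ite, Finset.prod_const, Finset.prod_const_one, mul_one]
  congr 2
  ext j
  simp

theorem AA_card (d M : ℕ) (a : Fin d → ℝ) (ha : ∀ i, 0 < a i) (J : Finset (Fin d)) (i : Fin d)
    (C : ℕ) (hC : (2 * ∑ j, a j) / a i + 1 ≤ C) (n : ℕ) (s : ℝ) :
    (AA d M a J n s).card ≤ C * (M ^ n) ^ (J.erase i).card := by
  classical
  refine (card_window a ha i C hC _ (fun j => if j ∈ J then Finset.range (M ^ n) else {0}) s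
    (fun v hv => ?_) (fun v hv j _ => ?_)).trans (le_of_eq ?_)
  · exact (Finset.mem_filter.1 hv).2
  · exact Fintype.mem_piFinset.1 (Finset.mem_filter.1 hv).1 j
  · rw [← prod_ite_erase]
    congr 1
    refine Finset.prod_congr rfl fun j _ => ?_
    split_ifs <;> simp

theorem CC_bound (d M : ℕ) [NeZero M] (hM : 2 ≤ M) (a : Fin d → ℝ) (ha : ∀ i, 0 < a i)
    (J : Finset (Fin d)) (i : Fin d) (hi : i ∈ J)
    (C : ℕ) (hC : (2 * ∑ j, a j) / a i + 1 ≤ C) (N n : ℕ) (hn : n < N) (s : ℝ) (y : ℕ)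
    (ω : Fin d → Perc1 M) (D : ℝ) (hD : ∀ s, (cnt d M a (J.erase i) n s ω : ℝ) ≤ D) :
    CC d M J N (AA d M a J N s) (fun _ => n) i (N - (n + 1)) y ω ≤
      D * C * ((M : ℝ) ^ (N - n)) ^ (J.erase i).card := by
  classical
  set K : ℕ := M ^ (N - n) with hK
  have hKM : M ≤ K := by
    rw [hK]; exact Nat.le_self_pow (by omega) M
  have hK0 : 0 < K := by omega
  have hK2 : (2 : ℝ) ≤ K := by exact_mod_cast hM.trans hKM
  set X := (AA d M a J N s).filter
    (fun v => v i / M ^ (N - (n + 1)) = y ∧ RR d M J N (fun _ => n) ω v) with hXdef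
  have hXA : ∀ v ∈ X, (∀ j, v j ∈ if j ∈ J then Finset.range (M ^ N) else {0}) ∧
      (s ≤ ∑ i, a i * (v i : ℝ) ∧ ∑ i, a i * (v i : ℝ) ≤ s + 2 * ∑ i, a i) ∧
      v i / K = y / M ∧ (∀ j ∈ J, Retained1 M (ω j) (wd M n (v j / K))) := by
    intro v hv
    rw [hXdef, Finset.mem_filter] at hv
    have h1 := Finset.mem_filter.1 hv.1
    refine ⟨Fintype.mem_piFinset.1 h1.1, h1.2, ?_, hv.2.2⟩
    rw [← hv.2.1, Nat.div_div_eq_div_mul, ← pow_succ, hK]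
    congr 2
    omega
  have h1 := Finset.card_le_mul_card_image (f := fun v : Fin d → ℕ => fun j => v j / K) X
    (C * K ^ (J.erase i).card) (by
      intro w _
      refine (card_window a ha i C hC _
        (fun j => if j ∈ J then Finset.Ico (w j * K) (w j * K + K) else {0}) s
        (fun v hv => ?_) (fun v hv j _ => ?_)).trans (le_of_eq ?_)
      · exact (hXA v (Finset.mem_filter.1 hv).1).2.1
      · have hv' := Finset.mem_filter.1 hv
        have h2 := (hXA v hv'.1).1 j
        have h3 := congrFun hv'.2 j
        split_ifs at h2 ⊢ with hj
        · rw [Finset.mem_Ico, ← h3]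
          have e1 := Nat.div_add_mod (v j) K
          have e2 := Nat.mod_lt (v j) hK0
          have e3 : v j / K * K = K * (v j / K) := Nat.mul_comm _ _
          change v j / K * K ≤ v j ∧ v j < v j / K * K + K
          rw [e3]
          constructor <;> omega
        · exact h2
      · rw [← prod_ite_erase]
        congr 1
        refine Finset.prod_congr rfl fun j _ => ?_
        split_ifs <;> simp)
  set Y := X.image (fun v : Fin d → ℕ => fun j => v j / K) with hY
  set y0 := y / M with hy0
  set σ := ∑ j, a j with hσ
  have h2 : Y.card ≤ cnt d M a (J.erase i) n (s / K - σ - a i * y0) ω := by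
    unfold cnt
    refine Finset.card_le_card_of_injOn (fun w => Function.update w i 0) ?_ ?_
    · intro w hw
      obtain ⟨v, hv, rfl⟩ := Finset.mem_image.1 hw
      obtain ⟨b1, b2, b3, b4⟩ := hXA v hv
      have hsum : ∑ j, a j * ((Function.update (fun j => v j / K) i 0 j : ℕ) : ℝ) =
          (∑ j, a j * ((v j / K : ℕ) : ℝ)) - a i * y0 := by
        rw [← Finset.add_sum_erase _ _ (Finset.mem_univ i),
          ← Finset.add_sum_erase (a := i) _ (fun j => a j * ((v j / K : ℕ) : ℝ))
            (Finset.mem_univ i)]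
        simp only [Function.update_self, Nat.cast_zero, mul_zero, zero_add, b3]
        rw [add_sub_cancel_left]
        refine Finset.sum_congr rfl fun j hj => ?_
        rw [Function.update_of_ne (Finset.ne_of_mem_erase hj)]
      have hlow : K * (∑ j, a j * ((v j / K : ℕ) : ℝ)) ≤ ∑ j, a j * (v j : ℝ) := by
        rw [Finset.mul_sum]
        refine Finset.sum_le_sum fun j _ => ?_
        have : ((K * (v j / K) : ℕ) : ℝ) ≤ (v j : ℕ) := Nat.cast_le.2 (Nat.mul_div_le _ _)
        push_cast at this
        have := mul_le_mul_of_nonneg_left this (ha j).le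
        linarith
      have hupp : ∑ j, a j * (v j : ℝ) ≤ K * (∑ j, a j * ((v j / K : ℕ) : ℝ)) + K * σ := by
        rw [hσ, Finset.mul_sum, Finset.mul_sum, ← Finset.sum_add_distrib]
        refine Finset.sum_le_sum fun j _ => ?_
        have h3 : v j ≤ K * (v j / K) + K := by
          have := Nat.div_add_mod (v j) K
          have := Nat.mod_lt (v j) hK0
          omega
        have : ((v j : ℕ) : ℝ) ≤ ((K * (v j / K) + K : ℕ) : ℝ) := Nat.cast_le.2 h3
        push_cast at this
        have := mul_le_mul_of_nonneg_left this (ha j).le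
        linarith
      have hKR : (0 : ℝ) < K := by linarith
      have hσ0 : 0 ≤ σ := Finset.sum_nonneg fun j _ => (ha j).le
      have l1 : s / K - σ ≤ ∑ j, a j * ((v j / K : ℕ) : ℝ) := by
        rw [sub_le_iff_le_add, div_le_iff₀ hKR]
        linarith [b2.1]
      have l2 : ∑ j, a j * ((v j / K : ℕ) : ℝ) ≤ s / K + σ := by
        rw [← sub_le_iff_le_add, le_div_iff₀ hKR]
        nlinarith [b2.2]
      simp only [Finset.coe_filter, mem_ofPred_eq]
      refine ⟨Finset.mem_filter.2 ⟨Fintype.mem_piFinset.2 fun j => ?_, ?_, ?_⟩, ?_⟩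
      · by_cases hj : j = i
        · subst hj; simp
        · rw [Function.update_of_ne hj]
          have := b1 j
          by_cases hjJ : j ∈ J
          · simp only [hjJ, if_true, Finset.mem_range] at this
            simp only [Finset.mem_erase, ne_eq, hj, not_false_eq_true, hjJ, and_self, if_true,
              Finset.mem_range]
            refine Nat.div_lt_of_lt_mul ?_
            rw [hK, ← pow_add, show N - n + n = N by omega]
            exact this
          · simp only [hjJ, if_false, Finset.mem_singleton] at this
            simp [hj, hjJ, this]
      · rw [hsum]; linarith
      · rw [hsum]; linarith
      · intro j hj
        rw [Function.update_of_ne (Finset.ne_of_mem_erase hj)]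
        exact b4 j (Finset.mem_of_mem_erase hj)
    · intro w hw w' hw' hww
      obtain ⟨v, hv, rfl⟩ := Finset.mem_image.1 hw
      obtain ⟨v', hv', rfl⟩ := Finset.mem_image.1 hw'
      ext j
      by_cases hj : j = i
      · subst hj
        rw [(hXA v hv).2.2.1, (hXA v' hv').2.2.1]
      · have := congrFun hww j
        simpa [hj] using this
  have h3 : (Y.card : ℝ) ≤ D := le_trans (Nat.cast_le.2 h2) (hD _)
  unfold CC
  calc (X.card : ℝ) ≤ ((C * K ^ (J.erase i).card * Y.card : ℕ) : ℝ) := Nat.cast_le.2 h1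
    _ = C * (K : ℝ) ^ (J.erase i).card * Y.card := by push_cast; ring
    _ ≤ C * (K : ℝ) ^ (J.erase i).card * D := mul_le_mul_of_nonneg_left h3 (by positivity)
    _ = _ := by rw [hK]; push_cast; ring

theorem cnt_dep (d M : ℕ) [NeZero M] (a : Fin d → ℝ) (J : Finset (Fin d)) (n : ℕ) (s : ℝ) :
    DepOn (lev d M fun _ => n) (cnt d M a J n s) := by
  intro ω ω' h
  have : (cnt d M a J n s ω : ℝ) = cnt d M a J n s ω' := by
    rw [cnt_eq_ZZ, cnt_eq_ZZ, ZZ_dep d M J n _ _ ω ω' h]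
  exact_mod_cast this

theorem cnt_le_AA (d M : ℕ) [NeZero M] (a : Fin d → ℝ) (J : Finset (Fin d)) (n : ℕ) (s : ℝ)
    (ω : Fin d → Perc1 M) : cnt d M a J n s ω ≤ (AA d M a J n s).card := by
  classical
  unfold cnt
  exact Finset.card_filter_le _ _

/-- every window is covered by two of the windows with index at most `M ^ n` -/
theorem cnt_cover (d M : ℕ) [NeZero M] (hd : 1 ≤ d) (a : Fin d → ℝ) (ha : ∀ i, 0 < a i)
    (J : Finset (Fin d))
    (n : ℕ) (s : ℝ) (ω : Fin d → Perc1 M) (R : ℝ) (hR : 0 ≤ R)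
    (h : ∀ k ≤ M ^ n, (cnt d M a J n (k * (2 * ∑ i, a i)) ω : ℝ) ≤ R) :
    (cnt d M a J n s ω : ℝ) ≤ 2 * R := by
  classical
  set ρ : ℝ := 2 * ∑ i, a i with hρ
  have hσ : 0 < ∑ i, a i :=
    Finset.sum_pos (fun i _ => ha i) ⟨⟨0, by omega⟩, Finset.mem_univ _⟩
  have hρ0 : 0 < ρ := by linarith
  -- index of a cube
  let f : (Fin d → ℕ) → ℕ := fun x => ⌊(∑ i, a i * (x i : ℝ)) / ρ⌋₊
  set X := (AA d M a J n s).filter fun x => ∀ j ∈ J, Retained1 M (ω j) (wd M n (x j)) with hX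
  have hxn : ∀ x ∈ X, (∀ j, x j ∈ if j ∈ J then Finset.range (M ^ n) else {0}) ∧
      (s ≤ ∑ i, a i * (x i : ℝ) ∧ ∑ i, a i * (x i : ℝ) ≤ s + ρ) ∧
      ∀ j ∈ J, Retained1 M (ω j) (wd M n (x j)) := by
    intro x hx
    rw [hX, Finset.mem_filter] at hx
    have h1 := Finset.mem_filter.1 hx.1
    exact ⟨Fintype.mem_piFinset.1 h1.1, h1.2, hx.2⟩
  have h0 : ∀ x : Fin d → ℕ, 0 ≤ (∑ i, a i * (x i : ℝ)) / ρ := fun x =>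
    div_nonneg (Finset.sum_nonneg fun i _ => mul_nonneg (ha i).le (Nat.cast_nonneg _)) hρ0.le
  have hfl : ∀ x, (f x : ℝ) * ρ ≤ ∑ i, a i * (x i : ℝ) ∧
      ∑ i, a i * (x i : ℝ) ≤ f x * ρ + ρ := by
    intro x
    have h1 := Nat.floor_le (h0 x)
    have h2 := (Nat.lt_floor_add_one ((∑ i, a i * (x i : ℝ)) / ρ)).le
    rw [le_div_iff₀ hρ0] at h1
    rw [div_le_iff₀ hρ0] at h2
    exact ⟨h1, by linarith⟩
  have hfM : ∀ x ∈ X, f x ≤ M ^ n := by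
    intro x hx
    have h1 : ∑ i, a i * (x i : ℝ) ≤ M ^ n * ρ := by
      calc ∑ i, a i * (x i : ℝ) ≤ ∑ i, a i * (M : ℝ) ^ n := by
            refine Finset.sum_le_sum fun i _ => mul_le_mul_of_nonneg_left ?_ (ha i).le
            have := (hxn x hx).1 i
            split_ifs at this with hi
            · exact_mod_cast (Finset.mem_range.1 this).le
            · rw [Finset.mem_singleton.1 this]; simp
        _ = (∑ i, a i) * (M : ℝ) ^ n := by rw [Finset.sum_mul]
        _ ≤ M ^ n * ρ := by
            have : (0 : ℝ) ≤ (M : ℝ) ^ n := by positivity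
            nlinarith
    have h2 : (f x : ℝ) ≤ ((M ^ n : ℕ) : ℝ) := by
      push_cast
      exact le_of_mul_le_mul_right ((hfl x).1.trans h1) hρ0
    exact_mod_cast h2
  have hmaps : ∀ x ∈ X, f x ∈ ({⌊s / ρ⌋₊, ⌊s / ρ⌋₊ + 1} : Finset ℕ) := by
    intro x hx
    have h1 := (hxn x hx).2.1
    have l1 : ⌊s / ρ⌋₊ ≤ f x := Nat.floor_mono ((div_le_div_iff_of_pos_right hρ0).2 h1.1)
    have l2 : f x < ⌊s / ρ⌋₊ + 2 := by
      refine (Nat.floor_lt (h0 x)).2 ?_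
      have := Nat.lt_floor_add_one (s / ρ)
      have e : (∑ i, a i * (x i : ℝ)) / ρ ≤ s / ρ + 1 := by
        rw [div_add_one hρ0.ne']
        exact (div_le_div_iff_of_pos_right hρ0).2 h1.2
      push_cast
      linarith
    simp only [Finset.mem_insert, Finset.mem_singleton]
    omega
  have hcard := Finset.card_eq_sum_card_fiberwise (f := f) (s := X)
    (t := {⌊s / ρ⌋₊, ⌊s / ρ⌋₊ + 1}) hmaps
  have hfib : ∀ k : ℕ, ((X.filter fun x => f x = k).card : ℝ) ≤ R := by
    intro k
    by_cases hk : k ≤ M ^ n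
    · refine le_trans (Nat.cast_le.2 (Finset.card_le_card ?_)) (h k hk)
      intro x hx
      rw [Finset.mem_filter] at hx
      obtain ⟨hx, rfl⟩ := hx
      obtain ⟨b1, b2, b3⟩ := hxn x hx
      refine Finset.mem_filter.2 ⟨Finset.mem_filter.2 ⟨Fintype.mem_piFinset.2 b1, ?_⟩, b3⟩
      exact hfl x
    · have : (X.filter fun x => f x = k) = ∅ := by
        rw [Finset.filter_eq_empty_iff]
        rintro x hx rfl
        exact hk (hfM x hx)
      rw [this]
      simpa using hR
  have : cnt d M a J n s ω = X.card := rfl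
  rw [this, hcard, Finset.sum_pair (by omega)]
  push_cast
  linarith [hfib ⌊s / ρ⌋₊, hfib (⌊s / ρ⌋₊ + 1)]

/-! ### Induction on the number of coordinates -/

theorem exists_window_const {d : ℕ} (a : Fin d → ℝ) (ha : ∀ i, 0 < a i) :
    ∃ C : ℕ, 1 ≤ C ∧ ∀ i, (2 * ∑ j, a j) / a i + 1 ≤ C := by
  refine ⟨⌈∑ i, ((2 * ∑ j, a j) / a i + 1)⌉₊ + 1, by omega, fun i => ?_⟩
  have hσ : 0 ≤ ∑ j, a j := Finset.sum_nonneg fun j _ => (ha j).le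
  have h1 : (2 * ∑ j, a j) / a i + 1 ≤ ∑ i, ((2 * ∑ j, a j) / a i + 1) :=
    Finset.single_le_sum (f := fun i => (2 * ∑ j, a j) / a i + 1)
      (fun j _ => by have := ha j; positivity) (Finset.mem_univ i)
  push_cast
  linarith [Nat.le_ceil (∑ i, ((2 * ∑ j, a j) / a i + 1))]

/-- the good event: slices are controlled up to level `n` -/
def GG (d M : ℕ) [NeZero M] (a : Fin d → ℝ) (J : Finset (Fin d)) (k B n : ℕ) :
    Set (Fin d → Perc1 M) :=
  {ω | ∀ m ≤ n, ∀ i ∈ J, ∀ s, (cnt d M a (J.erase i) m s ω : ℝ) ≤ (B + 1) * ((m : ℝ) + 1) ^ k}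

theorem GG_dep (d M : ℕ) [NeZero M] (a : Fin d → ℝ) (J : Finset (Fin d)) (k B n : ℕ) :
    DepOn (lev d M fun _ => n) (fun ω => ω ∈ GG d M a J k B n) := by
  intro ω ω' h
  unfold GG
  simp only [mem_ofPred_eq]
  refine propext (forall_congr' fun m => forall_congr' fun hm => forall_congr' fun i =>
    forall_congr' fun _ => forall_congr' fun s => ?_)
  rw [cnt_dep d M a (J.erase i) m s ω ω' fun q hq => h q (lev_mono d M (fun _ => hm) hq)]

theorem bad_summable {d M : ℕ} [NeZero M] (hM : 2 ≤ M) {p : Fin d → ℝ}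
    (hp0 : ∀ i, 0 < p i) (hp1 : ∀ i, p i ≤ 1)
    {P : Measure (Fin d → Perc1 M)} (hP : IsIndepBernoulli1 d M p P)
    (a : Fin d → ℝ) (ha : ∀ i, 0 < a i) (k : ℕ) (J : Finset (Fin d)) (hJ : J.card = k + 2)
    (hq1 : (M : ℝ) ^ (k + 1) * ∏ j ∈ J, p j < 1) (B : ℕ) :
    ∃ K : ℝ, 0 ≤ K ∧ ∀ᵐ ω ∂P, ∀ᶠ N in Filter.atTop, ω ∈ GG d M a J k B N →
      ∀ j ≤ M ^ N, (cnt d M a J N (j * (2 * ∑ i, a i)) ω : ℝ) ≤ K * ((N : ℝ) + 1) ^ (k + 1) := by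
  obtain ⟨C, hC1, hC⟩ := exists_window_const a ha
  set q : ℝ := (M : ℝ) ^ (k + 1) * ∏ j ∈ J, p j with hq
  have hM2 : (2 : ℝ) ≤ M := by exact_mod_cast hM
  have hq0 : 0 < q := mul_pos (by positivity) (Finset.prod_pos fun j _ => hp0 j)
  set c : ℝ := (1 - q) / (2 * J.card) with hc
  have hJpos : (1 : ℝ) ≤ J.card := by rw [hJ]; push_cast; linarith [(Nat.cast_nonneg k : (0:ℝ) ≤ k)]
  have hc0 : 0 < c := div_pos (by linarith) (by linarith)
  have hc1 : c ≤ 1 := by rw [hc, div_le_one (by linarith)]; linarith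
  have hcq : (J.card : ℝ) * c ≤ (1 - q) / 2 := by
    rw [hc]; apply le_of_eq; field_simp
  have hCr : (1 : ℝ) ≤ C := by exact_mod_cast hC1
  set γ : ℝ := c / (2 * C * (M : ℝ) ^ (k + 1)) with hγ
  have hγ0 : 0 < γ := div_pos hc0 (by positivity)
  have hlog : 0 ≤ Real.log (2 * M) := Real.log_nonneg (by linarith)
  set K0 : ℝ := Real.log (2 * M) / γ with hK0
  have hK00 : 0 ≤ K0 := div_nonneg hlog hγ0.le
  refine ⟨K0 * (B + 1), by positivity, ?_⟩
  set bad : ℕ → Set (Fin d → Perc1 M) := fun N => ⋃ j ∈ Finset.range (M ^ N + 1),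
    {ω | ω ∈ GG d M a J k B N ∧ K0 * (B + 1) * ((N : ℝ) + 1) ^ (k + 1) ≤
      ZZ d M J N (AA d M a J N ((j : ℕ) * (2 * ∑ i, a i))) (fun _ => N) ω} with hbad
  have hone : ∀ N j : ℕ, P {ω | ω ∈ GG d M a J k B N ∧ K0 * (B + 1) * ((N : ℝ) + 1) ^ (k + 1) ≤
      ZZ d M J N (AA d M a J N ((j : ℕ) * (2 * ∑ i, a i))) (fun _ => N) ω} ≤
      ENNReal.ofReal (Real.exp 1 * (1 / (2 * M)) ^ (N + 1)) := by
    intro N j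
    set D : ℝ := (B + 1) * ((N : ℝ) + 1) ^ k with hD
    have hN1 : (1 : ℝ) ≤ (N : ℝ) + 1 := by linarith [(Nat.cast_nonneg N : (0:ℝ) ≤ N)]
    have hB1 : (1 : ℝ) ≤ (B : ℝ) + 1 := by linarith [(Nat.cast_nonneg B : (0:ℝ) ≤ B)]
    have hD1 : 1 ≤ D := one_le_mul_of_one_le_of_one_le hB1 (one_le_pow₀ hN1)
    have herase : ∀ i ∈ J, (J.erase i).card = k + 1 := fun i hi => by
      rw [Finset.card_erase_of_mem hi, hJ]; rfl
    have ch := chain hp0 hp1 hP J N (AA d M a J N (j * (2 * ∑ i, a i)))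
      (by
        intro v hv i hi
        have := Fintype.mem_piFinset.1 (Finset.mem_filter.1 hv).1 i
        simpa [hi] using this)
      (GG d M a J k B) (GG_dep d M a J k B)
      (fun n n' hn ω hω m hm => hω m (hm.trans hn)) (k + 1) q hq hq1 D C c hD1 hCr hc0 hc1 hcq
      (by
        intro n hn ω hω i hi y
        have := CC_bound d M hM a ha J i hi C (hC i) N n hn (j * (2 * ∑ i, a i)) y ω D
          (by
            intro s
            refine (hω n le_rfl i hi s).trans ?_
            refine mul_le_mul_of_nonneg_left (pow_le_pow_left₀ (by positivity) ?_ _) (by positivity)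
            have : (n : ℝ) ≤ N := by exact_mod_cast hn.le
            linarith)
        rwa [herase i hi] at this)
      (by
        obtain ⟨i, hi⟩ : J.Nonempty := Finset.card_pos.1 (by omega)
        have := AA_card d M a ha J i C (hC i) N (j * (2 * ∑ i, a i))
        rw [herase i hi] at this
        exact_mod_cast this)
      (K0 * (B + 1) * ((N : ℝ) + 1) ^ (k + 1))
    refine ch.trans (ENNReal.ofReal_le_ofReal (le_of_eq ?_))
    have e1 : c / (2 * D * C * (M : ℝ) ^ (k + 1)) * (K0 * (B + 1) * ((N : ℝ) + 1) ^ (k + 1)) =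
        ((N + 1 : ℕ) : ℝ) * Real.log (2 * M) := by
      have e2 : c / (2 * D * C * (M : ℝ) ^ (k + 1)) = γ / D := by
        rw [hγ]; field_simp
      have e3 : K0 * (B + 1) * ((N : ℝ) + 1) ^ (k + 1) = K0 * D * (N + 1) := by
        rw [hD]; ring
      rw [e2, e3, hK0]
      push_cast
      field_simp
    rw [e1, sub_eq_add_neg, Real.exp_add, Real.exp_neg, Real.exp_nat_mul,
      Real.exp_log (by linarith), one_div, inv_pow]
  have hbadP : ∀ N, P (bad N) ≤ ENNReal.ofReal (Real.exp 1 * (1 / 2) ^ N) := by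
    intro N
    refine (measure_biUnion_finset_le _ _).trans ((Finset.sum_le_sum fun j _ => hone N j).trans ?_)
    rw [Finset.sum_const, Finset.card_range, nsmul_eq_mul, ← ENNReal.ofReal_natCast,
      ← ENNReal.ofReal_mul (by positivity)]
    refine ENNReal.ofReal_le_ofReal ?_
    have hMN : (1 : ℝ) ≤ (M : ℝ) ^ N := one_le_pow₀ (by linarith)
    have e1 : (1 / (2 * (M : ℝ))) ^ (N + 1) = (1 / 2) ^ N * (1 / (M : ℝ) ^ N) * (1 / (2 * M)) := by
      rw [pow_succ]; congr 1; rw [one_div_pow, one_div_pow, mul_pow]; field_simp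
    push_cast
    rw [e1]
    have e2 : ((M : ℝ) ^ N + 1) * (1 / (M : ℝ) ^ N * (1 / (2 * M))) ≤ 1 := by
      rw [one_div_mul_one_div, mul_one_div, div_le_one (by positivity)]
      nlinarith
    calc ((M : ℝ) ^ N + 1) * (Real.exp 1 * ((1 / 2) ^ N * (1 / (M : ℝ) ^ N) * (1 / (2 * M))))
        = (Real.exp 1 * (1 / 2) ^ N) * (((M : ℝ) ^ N + 1) * (1 / (M : ℝ) ^ N * (1 / (2 * M)))) := by
          ring
      _ ≤ (Real.exp 1 * (1 / 2) ^ N) * 1 := mul_le_mul_of_nonneg_left e2 (by positivity)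
      _ = _ := mul_one _
  have hsum : ∑' N, P (bad N) ≠ ∞ := by
    refine ne_top_of_le_ne_top ?_ (ENNReal.tsum_le_tsum hbadP)
    refine Summable.tsum_ofReal_ne_top ?_
    exact (summable_geometric_of_lt_one (by norm_num) (by norm_num)).mul_left _
  filter_upwards [ae_eventually_notMem hsum] with ω hω
  filter_upwards [hω] with N hN hG j hj
  by_contra hlt
  push Not at hlt
  apply hN
  simp only [hbad, mem_iUnion]
  refine ⟨j, by simp; omega, hG, ?_⟩
  rw [cnt_eq_ZZ] at hlt
  exact hlt.le

theorem main_ind {d M : ℕ} [NeZero M] (hd : 1 ≤ d) (hM : 2 ≤ M) {p : Fin d → ℝ}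
    (hp0 : ∀ i, 0 < p i) (hp1 : ∀ i, p i ≤ 1) (hpM : ∀ i, 1 ≤ M * p i)
    {P : Measure (Fin d → Perc1 M)} (hP : IsIndepBernoulli1 d M p P)
    (a : Fin d → ℝ) (ha : ∀ i, 0 < a i) (k : ℕ) :
    ∀ J : Finset (Fin d), J.card = k + 1 → (M : ℝ) ^ k * ∏ j ∈ J, p j < 1 →
    ∀ᵐ ω ∂P, ∃ B : ℕ, ∀ n s, (cnt d M a J n s ω : ℝ) ≤ B * ((n : ℝ) + 1) ^ k := by
  obtain ⟨C, hC1, hC⟩ := exists_window_const a ha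
  induction k with
  | zero =>
    intro J hJ _
    refine Filter.Eventually.of_forall fun ω => ⟨C, fun n s => ?_⟩
    obtain ⟨i, rfl⟩ := Finset.card_eq_one.1 hJ
    have h1 := (cnt_le_AA d M a {i} n s ω).trans (AA_card d M a ha {i} i C (hC i) n s)
    simp at h1
    simpa using h1
  | succ k ih =>
    intro J hJ hq
    have h1 : ∀ i ∈ J, ∀ᵐ ω ∂P, ∃ B : ℕ, ∀ n s,
        (cnt d M a (J.erase i) n s ω : ℝ) ≤ B * ((n : ℝ) + 1) ^ k := by
      intro i hi
      refine ih (J.erase i) (by rw [Finset.card_erase_of_mem hi, hJ]; rfl) (lt_of_le_of_lt ?_ hq)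
      rw [← Finset.mul_prod_erase J p hi]
      have : 0 ≤ (M : ℝ) ^ k * ∏ j ∈ J.erase i, p j :=
        mul_nonneg (by positivity) (Finset.prod_nonneg fun j _ => (hp0 j).le)
      calc (M : ℝ) ^ k * ∏ j ∈ J.erase i, p j
          ≤ (M * p i) * ((M : ℝ) ^ k * ∏ j ∈ J.erase i, p j) :=
            le_mul_of_one_le_left this (hpM i)
        _ = _ := by ring
    have h1' : ∀ᵐ ω ∂P, ∀ i ∈ J, ∃ B : ℕ, ∀ n s,
        (cnt d M a (J.erase i) n s ω : ℝ) ≤ B * ((n : ℝ) + 1) ^ k :=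
      ae_all_iff.2 fun i => by
        by_cases hi : i ∈ J
        · filter_upwards [h1 i hi] with ω hω _ using hω
        · exact Filter.Eventually.of_forall fun ω h => absurd h hi
    have h2 := fun B : ℕ => bad_summable hM hp0 hp1 hP a ha k J hJ hq B
    choose K hK0 hK using h2
    filter_upwards [h1', ae_all_iff.2 hK] with ω hω1 hω2
    have : ∀ i : Fin d, ∃ B : ℕ, i ∈ J → ∀ n s,
        (cnt d M a (J.erase i) n s ω : ℝ) ≤ B * ((n : ℝ) + 1) ^ k := by
      intro i
      by_cases hi : i ∈ J
      · obtain ⟨B, hB⟩ := hω1 i hi; exact ⟨B, fun _ => hB⟩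
      · exact ⟨0, fun h => absurd h hi⟩
    choose b hb using this
    set B := ∑ i, b i with hB
    have hG : ∀ N, ω ∈ GG d M a J k B N := by
      intro N m _ i hi s
      refine (hb i hi m s).trans (mul_le_mul_of_nonneg_right ?_ (by positivity))
      have : b i ≤ B := Finset.single_le_sum (fun _ _ => Nat.zero_le _) (Finset.mem_univ i)
      have : (b i : ℝ) ≤ B := by exact_mod_cast this
      linarith
    obtain ⟨N0, hN0⟩ := Filter.eventually_atTop.1 (hω2 B)
    refine ⟨⌈2 * K B⌉₊ + C * (M ^ N0) ^ (k + 1), fun n s => ?_⟩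
    have hn1 : (1 : ℝ) ≤ ((n : ℝ) + 1) ^ (k + 1) :=
      one_le_pow₀ (by linarith [(Nat.cast_nonneg n : (0:ℝ) ≤ n)])
    by_cases hn : N0 ≤ n
    · have h3 := cnt_cover d M hd a ha J n s ω (K B * ((n : ℝ) + 1) ^ (k + 1))
        (mul_nonneg (hK0 B) (by linarith)) (hN0 n hn (hG n))
      refine h3.trans ?_
      rw [← mul_assoc]
      refine mul_le_mul_of_nonneg_right ?_ (by linarith)
      refine (Nat.le_ceil _).trans (Nat.cast_le.2 (Nat.le_add_right _ _))
    · obtain ⟨i, hi⟩ : J.Nonempty := Finset.card_pos.1 (by omega)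
      have h4 := (cnt_le_AA d M a J n s ω).trans (AA_card d M a ha J i C (hC i) n s)
      rw [Finset.card_erase_of_mem hi, hJ] at h4
      have h5 : (M ^ n) ^ (k + 1) ≤ (M ^ N0) ^ (k + 1) :=
        Nat.pow_le_pow_left (Nat.pow_le_pow_right (by omega) (by omega)) _
      have h6 : cnt d M a J n s ω ≤ ⌈2 * K B⌉₊ + C * (M ^ N0) ^ (k + 1) :=
        h4.trans ((Nat.mul_le_mul_left C h5).trans (Nat.le_add_left _ _))
      exact (Nat.cast_le.2 h6).trans (le_mul_of_one_le_right (Nat.cast_nonneg _) hn1)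

/-! ### Extinction in the subcritical case -/

theorem ret_lintegral {d M : ℕ} [NeZero M] {p : Fin d → ℝ}
    {P : Measure (Fin d → Perc1 M)} (hP : IsIndepBernoulli1 d M p P) (i : Fin d) (n x : ℕ) :
    P {ω | Retained1 M (ω i) (wd M n x)} ≤ ENNReal.ofReal (p i) ^ n := by
  classical
  have dep : ∀ n x, DepOn (lev d M fun _ => n) (fun ω : Fin d → Perc1 M =>
      if Retained1 M (ω i) (wd M n x) then (1 : ℝ≥0∞) else 0) := by
    intro n x ω ω' h
    have := ret_congr M (ω i) (ω' i) n x fun q hq => h (i, q) hq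
    simp only [this]
  have key : ∀ n x, ∫⁻ ω, (if Retained1 M (ω i) (wd M n x) then (1 : ℝ≥0∞) else 0) ∂P =
      ENNReal.ofReal (p i) ^ n := by
    intro n
    induction n with
    | zero =>
      intro x
      have := hP.1
      simp [ret_zero]
    | succ n ih =>
      intro x
      have h := lintegral_single hP (lev_finite d M fun _ => n)
        (i, ⟨wd M (n + 1) x, wd_ne_nil M n x⟩)
        (by
          intro h
          have : (wd M (n + 1) x).length ≤ n := h
          rw [wd_length] at this
          omega) _ (dep n (x / M)) true
      rw [ih] at h
      simp only [if_true] at h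
      rw [pow_succ', ← h]
      refine lintegral_congr fun ω => ?_
      simp only [ret_succ M (ω i) n x]
      split_ifs <;> tauto
  have mk := mul_meas_ge_le_lintegral (μ := P) ((dep n x).measurable (lev_finite d M _)) 1
  rw [key, one_mul] at mk
  refine (measure_mono ?_).trans mk
  intro ω hω
  have : Retained1 M (ω i) (wd M n x) := hω
  simp [this]

theorem extinct {d M : ℕ} [NeZero M] {p : Fin d → ℝ} (hp0 : ∀ i, 0 < p i)
    {P : Measure (Fin d → Perc1 M)} (hP : IsIndepBernoulli1 d M p P) (i : Fin d)
    (hi : M * p i < 1) :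
    ∀ᵐ ω ∂P, ∀ᶠ n in Filter.atTop, ∀ x < M ^ n, ¬ Retained1 M (ω i) (wd M n x) := by
  set bad : ℕ → Set (Fin d → Perc1 M) := fun n => ⋃ x ∈ Finset.range (M ^ n),
    {ω | Retained1 M (ω i) (wd M n x)} with hbad
  have hb : ∀ n, P (bad n) ≤ ENNReal.ofReal ((M * p i) ^ n) := by
    intro n
    refine (measure_biUnion_finset_le _ _).trans
      ((Finset.sum_le_sum fun j _ => ret_lintegral hP i n j).trans (le_of_eq ?_))
    rw [Finset.sum_const, Finset.card_range, nsmul_eq_mul, mul_pow,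
      ENNReal.ofReal_mul (by positivity), ENNReal.ofReal_pow (hp0 i).le]
    congr 1
    rw [← ENNReal.ofReal_natCast]
    push_cast
    rfl
  have hsum : ∑' n, P (bad n) ≠ ∞ := by
    refine ne_top_of_le_ne_top ?_ (ENNReal.tsum_le_tsum hb)
    refine Summable.tsum_ofReal_ne_top ?_
    exact summable_geometric_of_lt_one (mul_nonneg (Nat.cast_nonneg _) (hp0 i).le) hi
  filter_upwards [ae_eventually_notMem hsum] with ω hω
  filter_upwards [hω] with n hn x hx hr
  apply hn
  simp only [hbad, mem_iUnion]
  exact ⟨x, by simpa using hx, hr⟩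

/-! ### Hyperplanes and windows -/

theorem ncard_le_cnt (d M : ℕ) [NeZero M] (a : Fin d → ℝ) (ha : ∀ i, 0 < a i) (n : ℕ) (t : ℝ)
    (ω : Fin d → Perc1 M) :
    {w : Fin d → List (Fin M) |
            (∀ i, (w i).length = n ∧ Retained1 M (ω i) (w i)) ∧
            (Hplane d a t ∩ prodCube d M w).Nonempty}.ncard ≤
      cnt d M a Finset.univ n (t * (M : ℝ) ^ n - ∑ i, a i) ω := by
  classical
  set X := (AA d M a Finset.univ n (t * (M : ℝ) ^ n - ∑ i, a i)).filter
    fun x => ∀ j ∈ Finset.univ, Retained1 M (ω j) (wd M n (x j)) with hX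
  have hc : cnt d M a Finset.univ n (t * (M : ℝ) ^ n - ∑ i, a i) ω = X.card := rfl
  rw [hc]
  refine le_trans ?_ (Finset.card_image_le (s := X) (f := fun x i => wd M n (x i)))
  rw [← Set.ncard_coe_finset]
  refine Set.ncard_le_ncard ?_ (Finset.finite_toSet _)
  rintro w ⟨h1, y, hy1, hy2⟩
  choose x hx hxw using fun i => wd_surj M n (w i) (h1 i).1
  rw [Finset.mem_coe, Finset.mem_image]
  refine ⟨x, ?_, funext hxw⟩
  have hM0 : (0 : ℝ) < M := by exact_mod_cast Nat.pos_of_ne_zero (NeZero.ne M)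
  have hMn : (0 : ℝ) < (M : ℝ) ^ n := by positivity
  have hy1 : ∑ i, a i * y i = t := hy1
  have hb : ∀ i, (x i : ℝ) ≤ y i * (M : ℝ) ^ n ∧ y i * (M : ℝ) ^ n ≤ x i + 1 := by
    intro i
    have h := hy2 i
    unfold interval1 at h
    rw [(h1 i).1, zpow_neg, zpow_natCast] at h
    have e := base1_wd M n (x i) (hx i)
    rw [hxw i] at e
    rw [← e]
    constructor
    · exact mul_le_mul_of_nonneg_right h.1 hMn.le
    · calc y i * (M : ℝ) ^ n ≤ (base1 M (w i) + ((M : ℝ) ^ n)⁻¹) * (M : ℝ) ^ n :=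
            mul_le_mul_of_nonneg_right h.2 hMn.le
        _ = _ := by rw [add_mul, inv_mul_cancel₀ hMn.ne']
  have ht : t * (M : ℝ) ^ n = ∑ i, a i * (y i * (M : ℝ) ^ n) := by
    rw [← hy1, Finset.sum_mul]
    exact Finset.sum_congr rfl fun i _ => by ring
  have u1 : ∑ i, a i * (x i : ℝ) ≤ t * (M : ℝ) ^ n := by
    rw [ht]
    exact Finset.sum_le_sum fun i _ => mul_le_mul_of_nonneg_left (hb i).1 (ha i).le
  have u2 : t * (M : ℝ) ^ n ≤ ∑ i, a i * (x i : ℝ) + ∑ i, a i := by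
    rw [ht, ← Finset.sum_add_distrib]
    refine Finset.sum_le_sum fun i _ => ?_
    have := mul_le_mul_of_nonneg_left (hb i).2 (ha i).le
    linarith
  have hσ : 0 ≤ ∑ i, a i := Finset.sum_nonneg fun i _ => (ha i).le
  refine Finset.mem_filter.2 ⟨Finset.mem_filter.2 ⟨Fintype.mem_piFinset.2 fun i => ?_, ?_, ?_⟩, ?_⟩
  · simpa using hx i
  · linarith
  · linarith
  · intro i _
    rw [hxw i]
    exact (h1 i).2

/-- under `∏ pᵢ < M^{-(d-1)}` there is a constant `C̃` such that
almost surely (given all `E⁽ⁱ⁾ ≠ ∅`), for all large `n`, every hyperplane `H_t`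
meets at most `C̃ n^{(1+ε)(d-1)}` cubes of `Ẽ_n`. -/
theorem hyperplane_cube_count
    (d M : ℕ) (hd : 1 ≤ d) (hM : 2 ≤ M)
    (p : Fin d → ℝ) (hp0 : ∀ i, 0 < p i) (hp1 : ∀ i, p i ≤ 1)
    (hprod : ∏ i, p i < (M : ℝ) ^ (1 - (d : ℤ)))
    (P : Measure (Fin d → Perc1 M)) (hP : IsIndepBernoulli1 d M p P)
    (a : Fin d → ℝ) (ha : ∀ i, 0 < a i) (hnorm : ∑ i, a i ^ 2 = 1)
    (ε : ℝ) (hε : 0 < ε) :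
    ∃ C : ℝ, ∀ᵐ ω ∂(ProbabilityTheory.cond P {ω | ∀ i, limit1 M (ω i) ≠ ∅}),
      ∃ N : ℕ, ∀ n ≥ N, ∀ t : ℝ,
        (({w : Fin d → List (Fin M) |
            (∀ i, (w i).length = n ∧ Retained1 M (ω i) (w i)) ∧
            (Hplane d a t ∩ prodCube d M w).Nonempty}.ncard : ℝ)) ≤
          C * (n : ℝ) ^ ((1 + ε) * ((d : ℝ) - 1)) := by
  haveI : NeZero M := ⟨by omega⟩
  obtain ⟨C, hC1, hC⟩ := exists_window_const a ha
  have hCr : (1 : ℝ) ≤ C := by exact_mod_cast hC1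
  refine ⟨C, ?_⟩
  refine ProbabilityTheory.cond_absolutelyContinuous.ae_le ?_
  by_cases hsub : ∃ i, M * p i < 1
  · obtain ⟨i, hi⟩ := hsub
    filter_upwards [extinct hp0 hP i hi] with ω hω
    obtain ⟨N, hN⟩ := Filter.eventually_atTop.1 hω
    refine ⟨N, fun n hn t => ?_⟩
    have hempty : {w : Fin d → List (Fin M) |
            (∀ i, (w i).length = n ∧ Retained1 M (ω i) (w i)) ∧
            (Hplane d a t ∩ prodCube d M w).Nonempty} = ∅ := by
      refine Set.eq_empty_of_forall_notMem fun w hw => ?_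
      obtain ⟨x, hx, hxw⟩ := wd_surj M n (w i) (hw.1 i).1
      refine hN n hn x hx ?_
      rw [hxw]
      exact (hw.1 i).2
    rw [hempty, Set.ncard_empty, Nat.cast_zero]
    positivity
  push Not at hsub
  obtain ⟨k, rfl⟩ : ∃ k, d = k + 1 := ⟨d - 1, by omega⟩
  have hdk : (((k + 1 : ℕ) : ℝ) - 1) = k := by push_cast; ring
  rw [hdk]
  have hM0 : (0 : ℝ) < M := by exact_mod_cast (by omega : 0 < M)
  have hq : (M : ℝ) ^ k * ∏ j ∈ Finset.univ, p j < 1 := by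
    have e : (1 - ((k + 1 : ℕ) : ℤ)) = -(k : ℤ) := by push_cast; ring
    rw [e, zpow_neg, zpow_natCast] at hprod
    have := mul_lt_mul_of_pos_left hprod (pow_pos hM0 k)
    rwa [mul_inv_cancel₀ (pow_pos hM0 k).ne'] at this
  rcases Nat.eq_zero_or_pos k with rfl | hk
  · refine Filter.Eventually.of_forall fun ω => ⟨0, fun n _ t => ?_⟩
    have h1 := ((ncard_le_cnt (0 + 1) M a ha n t ω).trans (cnt_le_AA _ M a _ n _ ω)).trans
      (AA_card (0 + 1) M a ha Finset.univ 0 C (hC 0) n _)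
    have h0 : (Finset.univ.erase (0 : Fin (0 + 1))).card = 0 := by
      rw [Finset.card_erase_of_mem (Finset.mem_univ _), Finset.card_univ, Fintype.card_fin]
    rw [h0, pow_zero, mul_one] at h1
    rw [Nat.cast_zero, mul_zero, Real.rpow_zero, mul_one]
    exact_mod_cast h1
  filter_upwards [main_ind hd hM hp0 hp1 hsub hP a ha k Finset.univ (by simp) hq] with ω hω
  obtain ⟨B, hB⟩ := hω
  have hεk : 0 < ε * k := mul_pos hε (by exact_mod_cast hk)
  have hlim := (tendsto_rpow_atTop hεk).comp tendsto_natCast_atTop_atTop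
  obtain ⟨N, hN⟩ := Filter.eventually_atTop.1 (hlim.eventually_ge_atTop (B * (2 : ℝ) ^ k))
  refine ⟨max N 1, fun n hn t => ?_⟩
  have hn1 : 1 ≤ n := le_trans (le_max_right _ _) hn
  have hnr : (1 : ℝ) ≤ n := by exact_mod_cast hn1
  have hnN := hN n (le_trans (le_max_left _ _) hn)
  simp only [Function.comp] at hnN
  have h1 : (_ : ℝ) ≤ _ := Nat.cast_le.2 (ncard_le_cnt (k + 1) M a ha n t ω)
  refine h1.trans ((hB n _).trans ?_)
  have h2 : ((n : ℝ) + 1) ^ k ≤ 2 ^ k * (n : ℝ) ^ k := by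
    rw [← mul_pow]
    exact pow_le_pow_left₀ (by linarith) (by linarith) k
  have h3 : (n : ℝ) ^ ((1 + ε) * (k : ℝ)) = (n : ℝ) ^ (ε * k) * (n : ℝ) ^ k := by
    rw [← Real.rpow_natCast, ← Real.rpow_add (by linarith)]
    congr 1
    ring
  rw [h3]
  calc (B : ℝ) * ((n : ℝ) + 1) ^ k ≤ B * (2 ^ k * (n : ℝ) ^ k) :=
        mul_le_mul_of_nonneg_left h2 (Nat.cast_nonneg _)
    _ = (B * 2 ^ k) * (n : ℝ) ^ k := by ring
    _ ≤ (n : ℝ) ^ (ε * k) * (n : ℝ) ^ k := mul_le_mul_of_nonneg_right hnN (by positivity)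
    _ ≤ C * ((n : ℝ) ^ (ε * k) * (n : ℝ) ^ k) := le_mul_of_one_le_left (by positivity) hCr
end
end
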